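/- arXiv:1009.5375 — 5 statements merged into one kernel-verified Lean document; each statement's English description precedes it below -/
import Mathlib

section
/- The infinite series ∑_{k=1}^∞ 2^k · H_{k-1}^{(2)} / (k · C(2k,k)) converges and equals π³/48, where C(2k,k) denotes the central binomial coefficient. -/
/-- `H2 n` is the second-order harmonic number `∑_{k=1}^n 1/k²`. -/
def H2 (n : ℕ) : ℚ := ∑ k ∈ Finset.Icc 1 n, (1 : ℚ) / k ^ 2

/-!
Let `u n t = 4 ^ n / C(2n, n) * sin t ^ (2 * n)`, scaled to have mean value `1` over a period.
Then `u n - u (n + 1)` has mean zero and hence a periodic primitive `P n`, which is a multiple of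
`sin t ^ (2 * n + 1) * cos t`. By summation by parts,
`(∑ c n * P n)' = c 0 + ∑ (c (n + 1) - c n) * u (n + 1)` for `|t| < π / 2` and `c` of polynomial
growth: the boundary term `c N * u N` tends to `0`, as `u N` decays geometrically.
With `c = 1` this gives `∑ P n = t`. As `(u (n + 1) / (n + 1) ^ 2)' = 4 * P n`, it follows that
`∑ u (n + 1) / (n + 1) ^ 2 = 2 * t ^ 2`. With `c = H2` the derivative is `2 * t ^ 2`, so
`∑ H2 n * P n = 2 / 3 * t ^ 3`, and the theorem is twice this identity at `t = π / 4`.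
-/

open Filter Set Topology Asymptotics
open scoped Real

lemma H2_zero : H2 0 = 0 := by simp [H2]

lemma H2_succ (n : ℕ) : H2 (n + 1) = H2 n + 1 / ((n : ℚ) + 1) ^ 2 := by
  simp [H2, Finset.sum_Icc_succ_top]

lemma H2_nonneg (n : ℕ) : 0 ≤ H2 n := Finset.sum_nonneg fun _ _ ↦ by positivity

lemma H2_le_natCast (n : ℕ) : H2 n ≤ n := by
  have term_le_one : ∀ k ∈ Finset.Icc 1 n, (1 : ℚ) / k ^ 2 ≤ 1 := fun k hk ↦ by
    have one_le : (1 : ℚ) ≤ k := by exact_mod_cast (Finset.mem_Icc.1 hk).1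
    exact div_le_one_of_le₀ (one_le_pow₀ one_le) (by positivity)
  simpa [H2] using Finset.sum_le_card_nsmul _ _ _ term_le_one

lemma isBigO_H2 : (fun n ↦ (H2 n : ℝ)) =O[atTop] fun n : ℕ ↦ (n : ℝ) ^ 1 := by
  refine .of_norm_le fun n ↦ ?_
  have nonneg : (0 : ℝ) ≤ H2 n := by exact_mod_cast H2_nonneg n
  rw [Real.norm_of_nonneg nonneg, pow_one]
  exact_mod_cast H2_le_natCast n

lemma tendstoUniformlyOn_of_hasDerivWithinAt {ι 𝕜 E : Type*} [RCLike 𝕜] [NormedAddCommGroup E]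
    [NormedSpace 𝕜 E] {l : Filter ι} {s : Set 𝕜} {f f' : ι → 𝕜 → E} {g g' : 𝕜 → E} {x₀ : 𝕜}
    (hs : Convex ℝ s) (hbdd : Bornology.IsBounded s) (hx₀ : x₀ ∈ s)
    (hf : ∀ i, ∀ x ∈ s, HasDerivWithinAt (f i) (f' i x) s x)
    (hg : ∀ x ∈ s, HasDerivWithinAt g (g' x) s x)
    (h₀ : Tendsto (f · x₀) l (𝓝 (g x₀))) (h : TendstoUniformlyOn f' g' l s) :
    TendstoUniformlyOn f g l s := by
  obtain ⟨R, hR, hsR⟩ := hbdd.subset_closedBall_lt 0 x₀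
  rw [Metric.tendstoUniformlyOn_iff] at h ⊢
  intro ε hε
  filter_upwards [h (ε / 2 / R) (by positivity), Metric.tendsto_nhds.1 h₀ (ε / 2) (by positivity)]
    with i hderiv hbase x hx
  have increment : ‖(g x - f i x) - (g x₀ - f i x₀)‖ ≤ ε / 2 / R * ‖x - x₀‖ :=
    hs.norm_image_sub_le_of_norm_hasDerivWithin_le (f := fun x ↦ g x - f i x)
      (fun y hy ↦ (hg y hy).fun_sub (hf i y hy))
      (fun y hy ↦ by simpa [dist_eq_norm] using (hderiv y hy).le) hx₀ hx
  calc dist (g x) (f i x)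
      = ‖(g x - f i x) - (g x₀ - f i x₀) + (g x₀ - f i x₀)‖ := by simp [dist_eq_norm]
    _ ≤ ε / 2 / R * ‖x - x₀‖ + ‖g x₀ - f i x₀‖ := (norm_add_le _ _).trans (by gcongr)
    _ ≤ ε / 2 / R * R + ‖g x₀ - f i x₀‖ := by
      gcongr
      simpa [dist_eq_norm] using hsR hx
    _ < ε / 2 / R * R + ε / 2 := by
      gcongr
      rwa [← dist_eq_norm, dist_comm]
    _ = ε := by field_simp; ring

/-- The even power `sin t ^ (2 * n)` divided by its mean value `C(2n, n) / 4 ^ n` over a period. -/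
noncomputable def normalizedSinPow (n : ℕ) (t : ℝ) : ℝ :=
  4 ^ n / n.centralBinom * Real.sin t ^ (2 * n)

/-- The primitive of `normalizedSinPow n - normalizedSinPow (n + 1)` that vanishes at `0`. -/
noncomputable def sinPowDiffPrimitive (n : ℕ) (t : ℝ) : ℝ :=
  4 ^ (n + 1) / (2 * (n + 1) * (n + 1).centralBinom) * (Real.sin t ^ (2 * n + 1) * Real.cos t)

lemma normalizedSinPow_zero_left (t : ℝ) : normalizedSinPow 0 t = 1 := by simp [normalizedSinPow]

lemma normalizedSinPow_succ_zero (n : ℕ) : normalizedSinPow (n + 1) 0 = 0 := by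
  simp [normalizedSinPow]

lemma normalizedSinPow_nonneg (n : ℕ) (t : ℝ) : 0 ≤ normalizedSinPow n t :=
  mul_nonneg (by positivity) ((even_two_mul n).pow_nonneg _)

lemma normalizedSinPow_le_of_abs_le {T t : ℝ} (hT : T ≤ π / 2) (ht : |t| ≤ T) (n : ℕ) :
    normalizedSinPow n t ≤ normalizedSinPow n T := by
  have ⟨neg_le, le⟩ := abs_le.1 ht
  have abs_sin_le : |Real.sin t| ≤ Real.sin T := by
    rw [abs_le, ← Real.sin_neg]
    exact ⟨Real.sin_le_sin_of_le_of_le_pi_div_two (by linarith) (by linarith) neg_le,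
      Real.sin_le_sin_of_le_of_le_pi_div_two (by linarith) hT le⟩
  unfold normalizedSinPow
  rw [← (even_two_mul n).pow_abs]
  gcongr

lemma normalizedSinPow_le (n : ℕ) (t : ℝ) :
    normalizedSinPow n t ≤ (2 * n + 1) * (Real.sin t ^ 2) ^ n := by
  have four_pow_le : (4 : ℝ) ^ n ≤ (2 * n + 1) * n.centralBinom := by
    exact_mod_cast Nat.four_pow_le_two_mul_add_one_mul_central_binom n
  have centralBinom_pos : (0 : ℝ) < n.centralBinom := by exact_mod_cast n.centralBinom_pos
  unfold normalizedSinPow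
  rw [pow_mul]
  gcongr
  exact (div_le_iff₀ centralBinom_pos).2 four_pow_le

lemma tendsto_mul_normalizedSinPow {c : ℕ → ℝ} {k : ℕ} (hc : c =O[atTop] fun n ↦ (n : ℝ) ^ k)
    {t : ℝ} (ht : |t| < π / 2) : Tendsto (fun n ↦ c n * normalizedSinPow n t) atTop (𝓝 0) := by
  have sin_sq_lt_one : Real.sin t ^ 2 < 1 := by
    have cos_pos : 0 < Real.cos t := Real.cos_pos_of_mem_Ioo (abs_lt.1 ht)
    linarith [Real.sin_sq t, pow_pos cos_pos 2]
  have isBigO_normalizedSinPow :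
      (normalizedSinPow · t) =O[atTop] fun n : ℕ ↦ (n : ℝ) * (Real.sin t ^ 2) ^ n := by
    refine .of_bound 3 ?_
    filter_upwards [eventually_ge_atTop 1] with n hn
    have one_le : (1 : ℝ) ≤ n := by exact_mod_cast hn
    rw [Real.norm_of_nonneg (normalizedSinPow_nonneg n t), Real.norm_of_nonneg (by positivity),
      ← mul_assoc]
    refine (normalizedSinPow_le n t).trans ?_
    gcongr
    linarith
  refine (hc.mul isBigO_normalizedSinPow).trans_tendsto ?_
  simpa only [pow_succ, mul_assoc] using
    tendsto_pow_const_mul_const_pow_of_lt_one (k + 1) (sq_nonneg (Real.sin t)) sin_sq_lt_one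

lemma tendstoUniformlyOn_mul_normalizedSinPow {c : ℕ → ℝ} {k : ℕ}
    (hc : c =O[atTop] fun n ↦ (n : ℝ) ^ k) {T : ℝ} (hT : T ∈ Ico 0 (π / 2)) :
    TendstoUniformlyOn (fun n t ↦ c n * normalizedSinPow n t) 0 atTop (Icc (-T) T) := by
  have tendsto_T := tendsto_mul_normalizedSinPow hc (abs_of_nonneg hT.1 |>.trans_lt hT.2)
  rw [Metric.tendstoUniformlyOn_iff]
  intro ε hε
  filter_upwards [Metric.tendsto_nhds.1 tendsto_T ε hε] with n hn t ht
  rw [dist_zero_right] at hn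
  rw [Pi.zero_apply, dist_zero_left]
  refine lt_of_le_of_lt ?_ hn
  rw [norm_mul, norm_mul, Real.norm_of_nonneg (normalizedSinPow_nonneg n t),
    Real.norm_of_nonneg (normalizedSinPow_nonneg n T)]
  gcongr
  exact normalizedSinPow_le_of_abs_le hT.2.le (abs_le.2 ht) n

lemma sinPowDiffPrimitive_apply_zero (n : ℕ) : sinPowDiffPrimitive n 0 = 0 := by
  simp [sinPowDiffPrimitive]

lemma sinPowDiffPrimitive_neg (n : ℕ) (t : ℝ) :
    sinPowDiffPrimitive n (-t) = -sinPowDiffPrimitive n t := by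
  simp [sinPowDiffPrimitive, (odd_two_mul_add_one n).neg_pow]

lemma sinPowDiffPrimitive_nonneg (n : ℕ) {t : ℝ} (ht : t ∈ Icc 0 (π / 2)) :
    0 ≤ sinPowDiffPrimitive n t := by
  have ⟨h0, h1⟩ := ht
  have sin_nonneg : 0 ≤ Real.sin t := Real.sin_nonneg_of_nonneg_of_le_pi h0 (by linarith)
  have cos_nonneg : 0 ≤ Real.cos t := Real.cos_nonneg_of_mem_Icc ⟨by linarith, h1⟩
  unfold sinPowDiffPrimitive
  positivity

lemma sinPowDiffPrimitive_pi_div_four (n : ℕ) :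
    sinPowDiffPrimitive n (π / 4) = 2 ^ (n + 1) / (2 * (n + 1) * (n + 1).centralBinom) := by
  have sin_pow_mul_cos : Real.sin (π / 4) ^ (2 * n + 1) * Real.cos (π / 4) = (1 / 2) ^ (n + 1) := by
    rw [Real.cos_pi_div_four, ← Real.sin_pi_div_four, ← pow_succ, ← mul_add_one 2 n, pow_mul,
      Real.sin_pi_div_four, div_pow, Real.sq_sqrt zero_le_two]
    norm_num
  rw [sinPowDiffPrimitive, sin_pow_mul_cos, div_mul_eq_mul_div, ← mul_pow]
  norm_num

lemma hasDerivAt_normalizedSinPow_succ_div_sq (n : ℕ) (t : ℝ) :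
    HasDerivAt (fun t ↦ normalizedSinPow (n + 1) t / ((n : ℝ) + 1) ^ 2)
      (4 * sinPowDiffPrimitive n t) t := by
  refine ((((Real.hasDerivAt_sin t).fun_pow (2 * (n + 1))).const_mul _).div_const _).congr_deriv ?_
  rw [sinPowDiffPrimitive, show 2 * (n + 1) - 1 = 2 * n + 1 by lia]
  push_cast
  field_simp
  ring

lemma hasDerivAt_sinPowDiffPrimitive (n : ℕ) (t : ℝ) :
    HasDerivAt (sinPowDiffPrimitive n) (normalizedSinPow n t - normalizedSinPow (n + 1) t) t := by
  have centralBinom_succ :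
      ((n : ℝ) + 1) * (n + 1).centralBinom = 2 * (2 * n + 1) * n.centralBinom := by
    exact_mod_cast n.succ_mul_centralBinom_succ
  have centralBinom_ne_zero : (n.centralBinom : ℝ) ≠ 0 := by exact_mod_cast n.centralBinom_ne_zero
  have cos_mul_cos : Real.cos t * Real.cos t = 1 - Real.sin t ^ 2 := by rw [← sq, Real.cos_sq']
  refine ((((Real.hasDerivAt_sin t).fun_pow (2 * n + 1)).fun_mul
    (Real.hasDerivAt_cos t)).const_mul _).congr_deriv ?_
  rw [mul_assoc _ (Real.cos t), cos_mul_cos, normalizedSinPow, normalizedSinPow, mul_assoc 2,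
    eq_div_of_mul_eq (by positivity) ((mul_comm _ _).trans centralBinom_succ)]
  rw [Nat.add_sub_cancel]
  push_cast
  field_simp
  ring

lemma sum_range_mul_sub_succ {R : Type*} [Ring R] (c u : ℕ → R) (N : ℕ) :
    ∑ n ∈ Finset.range N, c n * (u n - u (n + 1)) =
      c 0 * u 0 + ∑ n ∈ Finset.range N, (c (n + 1) - c n) * u (n + 1) - c N * u N := by
  induction N with
  | zero => simp
  | succ N ih => rw [Finset.sum_range_succ, Finset.sum_range_succ, ih]; noncomm_ring

lemma hasDerivAt_sum_mul_sinPowDiffPrimitive (c : ℕ → ℝ) (N : ℕ) (t : ℝ) :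
    HasDerivAt (fun t ↦ ∑ n ∈ Finset.range N, c n * sinPowDiffPrimitive n t)
      (c 0 + ∑ n ∈ Finset.range N, (c (n + 1) - c n) * normalizedSinPow (n + 1) t -
        c N * normalizedSinPow N t) t := by
  refine (HasDerivAt.fun_sum fun n _ ↦
    (hasDerivAt_sinPowDiffPrimitive n t).const_mul (c n)).congr_deriv ?_
  rw [sum_range_mul_sub_succ c (normalizedSinPow · t), normalizedSinPow_zero_left, mul_one]

section

variable {T : ℝ} (hT : T ∈ Ico 0 (π / 2))
include hT

lemma tendstoUniformlyOn_sum_mul_sinPowDiffPrimitive {c : ℕ → ℝ} {k : ℕ} {g h : ℝ → ℝ}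
    (hc : c =O[atTop] fun n ↦ (n : ℝ) ^ k)
    (hsum : TendstoUniformlyOn
      (fun N t ↦ ∑ n ∈ Finset.range N, (c (n + 1) - c n) * normalizedSinPow (n + 1) t)
      h atTop (Icc (-T) T))
    (hg : ∀ t ∈ Icc (-T) T, HasDerivAt g (c 0 + h t) t) (hg₀ : g 0 = 0) :
    TendstoUniformlyOn (fun N t ↦ ∑ n ∈ Finset.range N, c n * sinPowDiffPrimitive n t)
      g atTop (Icc (-T) T) := by
  have tendsto_deriv := (((tendsto_const_nhds (x := c 0)).tendstoUniformlyOn_const _).add hsum).sub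
    (tendstoUniformlyOn_mul_normalizedSinPow hc hT)
  refine tendstoUniformlyOn_of_hasDerivWithinAt (convex_Icc _ _) (Metric.isBounded_Icc _ _)
    (x₀ := 0) ⟨neg_nonpos.2 hT.1, hT.1⟩
    (fun N t _ ↦ (hasDerivAt_sum_mul_sinPowDiffPrimitive c N t).hasDerivWithinAt)
    (fun t ht ↦ (hg t ht).hasDerivWithinAt) ?_ ?_
  · simp [sinPowDiffPrimitive_apply_zero, hg₀]
  · simpa only [sub_zero] using! tendsto_deriv

lemma tendstoUniformlyOn_sum_sinPowDiffPrimitive :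
    TendstoUniformlyOn (fun N t ↦ ∑ n ∈ Finset.range N, sinPowDiffPrimitive n t)
      (fun t ↦ t) atTop (Icc (-T) T) := by
  have isBigO_one : (fun _ : ℕ ↦ (1 : ℝ)) =O[atTop] fun n ↦ (n : ℝ) ^ 0 := by
    simpa only [pow_zero] using isBigO_refl _ _
  simpa only [one_mul] using tendstoUniformlyOn_sum_mul_sinPowDiffPrimitive hT isBigO_one
    (h := 0) (g := fun t ↦ t) (by simpa using! tendsto_const_nhds.tendstoUniformlyOn_const _)
    (fun t _ ↦ by simpa using hasDerivAt_id' t) rfl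

lemma tendstoUniformlyOn_sum_normalizedSinPow_succ_div_sq :
    TendstoUniformlyOn
      (fun N t ↦ ∑ n ∈ Finset.range N, normalizedSinPow (n + 1) t / ((n : ℝ) + 1) ^ 2)
      (fun t ↦ 2 * t ^ 2) atTop (Icc (-T) T) := by
  refine tendstoUniformlyOn_of_hasDerivWithinAt (convex_Icc _ _) (Metric.isBounded_Icc _ _)
    (x₀ := 0) ⟨neg_nonpos.2 hT.1, hT.1⟩
    (fun N t _ ↦ (HasDerivAt.fun_sum fun n _ ↦
      hasDerivAt_normalizedSinPow_succ_div_sq n t).hasDerivWithinAt)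
    (fun t _ ↦ ((hasDerivAt_pow 2 t).const_mul 2).hasDerivWithinAt) ?_ ?_
  · simp [normalizedSinPow_succ_zero]
  · convert! (uniformContinuous_mul_left' 4).comp_tendstoUniformlyOn
      (tendstoUniformlyOn_sum_sinPowDiffPrimitive hT) using 1
    · ext N t
      exact (Finset.mul_sum ..).symm
    · ext t
      rw [Function.comp_apply]
      push_cast
      ring

lemma tendstoUniformlyOn_sum_H2_mul_sinPowDiffPrimitive :
    TendstoUniformlyOn (fun N t ↦ ∑ n ∈ Finset.range N, (H2 n : ℝ) * sinPowDiffPrimitive n t)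
      (fun t ↦ 2 / 3 * t ^ 3) atTop (Icc (-T) T) := by
  refine tendstoUniformlyOn_sum_mul_sinPowDiffPrimitive hT isBigO_H2
    (h := fun t ↦ 2 * t ^ 2) ?_ (fun t _ ↦ ?_) (by simp)
  · simpa [H2_succ, div_eq_inv_mul] using tendstoUniformlyOn_sum_normalizedSinPow_succ_div_sq hT
  · refine ((hasDerivAt_pow 3 t).const_mul (2 / 3)).congr_deriv ?_
    rw [H2_zero]
    push_cast
    ring

end

theorem hasSum_H2_mul_sinPowDiffPrimitive {t : ℝ} (ht : |t| < π / 2) :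
    HasSum (fun n ↦ (H2 n : ℝ) * sinPowDiffPrimitive n t) (2 / 3 * t ^ 3) := by
  wlog ht₀ : 0 ≤ t generalizing t
  · simpa [sinPowDiffPrimitive_neg, (by decide : Odd 3).neg_pow] using
      (this (t := -t) (by rwa [abs_neg]) (by linarith)).neg
  have ht₁ : t < π / 2 := (abs_lt.1 ht).2
  have H2_nonneg_real (n : ℕ) : (0 : ℝ) ≤ H2 n := by exact_mod_cast H2_nonneg n
  rw [hasSum_iff_tendsto_nat_of_nonneg fun n ↦
    mul_nonneg (H2_nonneg_real n) (sinPowDiffPrimitive_nonneg n ⟨ht₀, ht₁.le⟩)]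
  exact (tendstoUniformlyOn_sum_H2_mul_sinPowDiffPrimitive ⟨ht₀, ht₁⟩).tendsto_at
    ⟨by linarith, le_rfl⟩

/-- The series `∑_{k=1}^∞ 2^k H_{k-1}^{(2)} / (k C(2k,k))` converges with sum `π³/48`. -/
theorem sum_two_pow_harmonic2_div_centralBinom :
    HasSum (fun n : ℕ =>
        (2 : ℝ) ^ (n + 1) * (H2 n : ℝ) / ((n + 1) * ((2 * (n + 1)).choose (n + 1))))
      (Real.pi ^ 3 / 48) := by
  have abs_pi_div_four_lt : |π / 4| < π / 2 := by
    rw [abs_of_pos (by positivity)]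
    linarith [Real.pi_pos]
  convert! (hasSum_H2_mul_sinPowDiffPrimitive abs_pi_div_four_lt).mul_left 2 using 1
  · funext n
    rw [sinPowDiffPrimitive_pi_div_four, Nat.centralBinom]
    field_simp
  · ring
end

section
/- Let p > 3 be a prime. Then ∑_{k=0}^{p-1} (C(2k,k)/2^k) · H_k^{(2)} ≡ -E_{p-3} (mod p), as a congruence of rational numbers whose denominators are coprime to p. -/
/-- `H n` is the harmonic number `∑_{k=1}^n 1/k`. -/
def H (n : ℕ) : ℚ := ∑ k ∈ Finset.Icc 1 n, (1 : ℚ) / k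

/-- The Euler numbers: `E 0 = 1` and `∑_{0 ≤ k ≤ n, k even} C(n,k) E_{n-k} = 0` for `n ≥ 1`. -/
def eulerNumber : ℕ → ℚ
  | 0 => 1
  | n + 1 =>
      -∑ j ∈ (Finset.range (n + 1)).attach,
        if Even (n + 1 - j.1) then ((n + 1).choose (n + 1 - j.1) : ℚ) * eulerNumber j.1 else 0
decreasing_by exact Finset.mem_range.mp j.2

/-- For rationals, `a ≡ b (mod m)` : `m` divides the numerator of `a - b` in lowest terms. -/
def ratModEq (m : ℕ) (a b : ℚ) : Prop := (m : ℤ) ∣ (a - b).num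

/-!
Put `t = x (1 - x)` and `p = 2 n + 1`. Modulo `p` one has `C(2k, k) = C(n, k) (-4)^k` for `k < p`,
and the derivation `δ = x (1 - x) d/dx` takes `(1 - 2 x) ∑ C(2k, k) H_k^{(2)} t^k` to
`∑ C(2k, k) t^k / k`, and the latter to
`(1 - 2 x) ∑_{k ≥ 1} C(2k, k) t^k = (1 - 2 x)^p - (1 - 2 x) = 2 (x - x^p)`. The homogenized finite
polylogarithms `L_s = ∑_{0 < k < p} x^(p - k) (x - 1)^k / k^s` satisfy `δ L_(s + 1) = -L_s` and
`L_0 = x - x^p`. A polynomial of degree at most `p` is determined by its image under `δ` and its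
values at `0` and `1`, so `(1 - 2 x) ∑ C(2k, k) H_k^{(2)} t^k = 2 L_2`.

At `x = (1 + i) / 2` with `i^2 = -1` one has `t = 1 / 2` and `x - 1 = i x`, so that `L_2` becomes
`x^p ∑ i^k / k^2 = x^p ∑ i^k k^(p - 3)`. The umbral identity `(E + 1)^m + (E - 1)^m = 2 * 0^m` gives
`2 ∑ i^k k^(p - 3) = i (1 - i^p) E_{p - 3}`, and the theorem follows from `2 x^p = 1 + i^p` and
`(i^p)^2 = -1`.
-/

open Finset Polynomial

section EulerNumbers

lemma eulerNumber_mem (S : Subring ℚ) (n : ℕ) : eulerNumber n ∈ S := by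
  induction n using Nat.strong_induction_on with
  | _ n ih =>
    cases n with
    | zero => simpa only [eulerNumber] using S.one_mem
    | succ n =>
      rw [eulerNumber]
      refine neg_mem (sum_mem fun j _ => ?_)
      split_ifs
      · exact mul_mem (natCast_mem S _) (ih j (mem_range.mp j.2))
      · exact zero_mem S

lemma sum_choose_mul_eulerNumber (n : ℕ) :
    ∑ j ∈ range (n + 1), (if Even (n - j) then (n.choose j : ℚ) * eulerNumber j else 0) =
      0 ^ n := by
  cases n with
  | zero => simp [eulerNumber]
  | succ n =>
    have hrec : eulerNumber (n + 1) = -∑ j ∈ range (n + 1),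
        if Even (n + 1 - j) then ((n + 1).choose j : ℚ) * eulerNumber j else 0 := by
      rw [eulerNumber, sum_attach (range (n + 1)) fun j =>
        if Even (n + 1 - j) then ((n + 1).choose (n + 1 - j) : ℚ) * eulerNumber j else 0]
      congr 1
      refine sum_congr rfl fun j hj => ?_
      rw [Nat.choose_symm (mem_range.mp hj).le]
    rw [sum_range_succ, hrec]
    simp

/-- The Euler numbers as integers, so that they can be cast to any ring. -/
def eulerInt (n : ℕ) : ℤ := (eulerNumber n).num

lemma cast_eulerInt (n : ℕ) : (eulerInt n : ℚ) = eulerNumber n := by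
  obtain ⟨z, hz⟩ := eulerNumber_mem (Int.castRingHom ℚ).range n
  simp [eulerInt, ← hz]

lemma sum_choose_mul_eulerInt (n : ℕ) :
    ∑ j ∈ range (n + 1), (if Even (n - j) then (n.choose j : ℤ) * eulerInt j else 0) =
      0 ^ n := by
  have h := sum_choose_mul_eulerNumber n
  simp only [← cast_eulerInt] at h
  exact_mod_cast h

lemma eulerInt_eq_zero_of_odd {n : ℕ} (hn : Odd n) : eulerInt n = 0 := by
  induction n using Nat.strong_induction_on with
  | _ n ih =>
    have hrec := sum_choose_mul_eulerInt n
    rw [sum_range_succ, sum_eq_zero, zero_pow hn.pos.ne'] at hrec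
    · simpa using hrec
    · intro j hj
      have hjn := mem_range.mp hj
      split_ifs with heven
      · have hj_odd : Odd j := by
          rwa [← Nat.not_even_iff_odd, ← (Nat.even_sub hjn.le).mp heven, Nat.not_even_iff_odd]
        rw [ih j hjn hj_odd, mul_zero]
      · rfl

end EulerNumbers

section EulerFunctional

variable (R : Type*) [CommRing R]

/-- The umbral functional of the Euler numbers: the linear functional on polynomials that sends
`X ^ n` to the `n`-th Euler number. -/
noncomputable def eulerFunctional : R[X] →ₗ[R] R :=
  lsum fun n => (eulerInt n : R) • LinearMap.id

variable {R}

lemma eulerFunctional_monomial (n : ℕ) (a : R) :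
    eulerFunctional R (monomial n a) = eulerInt n * a := by
  simp [eulerFunctional]

lemma eulerFunctional_X_pow (n : ℕ) : eulerFunctional R (X ^ n) = eulerInt n := by
  rw [X_pow_eq_monomial, eulerFunctional_monomial, mul_one]

lemma eulerFunctional_comp_neg_X (f : R[X]) :
    eulerFunctional R (f.comp (-X)) = eulerFunctional R f := by
  induction f using Polynomial.induction_on' with
  | add f g hf hg => rw [add_comp, map_add, map_add, hf, hg]
  | monomial n a =>
    rcases Nat.even_or_odd n with hn | hn
    · rw [monomial_comp, hn.neg_pow, C_mul_X_pow_eq_monomial]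
    · rw [monomial_comp, hn.neg_pow, mul_neg, C_mul_X_pow_eq_monomial, map_neg,
        eulerFunctional_monomial, eulerInt_eq_zero_of_odd hn]
      simp

lemma eulerFunctional_X_add_one_pow_add (n : ℕ) :
    eulerFunctional R ((X + 1) ^ n + (X - 1) ^ n) = 2 * 0 ^ n := by
  have hexpand : (X + 1 : R[X]) ^ n + (X - 1) ^ n =
      ∑ j ∈ range (n + 1), if Even (n - j) then monomial j (2 * (n.choose j : R)) else 0 := by
    rw [sub_eq_add_neg, add_pow, add_pow, ← sum_add_distrib]
    refine sum_congr rfl fun j _ => ?_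
    rw [← C_mul_X_pow_eq_monomial, C_mul, C_eq_natCast, C_ofNat]
    split_ifs with h
    · rw [h.neg_one_pow]
      ring
    · rw [(Nat.not_even_iff_odd.mp h).neg_one_pow]
      ring
  have hrec := congrArg (Int.cast : ℤ → R) (sum_choose_mul_eulerInt n)
  push_cast at hrec
  rw [hexpand, map_sum, ← hrec, mul_sum]
  refine sum_congr rfl fun j _ => ?_
  split_ifs
  · rw [eulerFunctional_monomial]
    ring
  · simp

lemma eulerFunctional_taylor_one_add (f : R[X]) :
    eulerFunctional R (taylor 1 f) + eulerFunctional R (taylor (-1) f) = 2 * f.eval 0 := by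
  induction f using Polynomial.induction_on' with
  | add f g hf hg =>
    simp only [map_add, eval_add]
    linear_combination hf + hg
  | monomial n a =>
    have h := eulerFunctional_X_add_one_pow_add (R := R) n
    rw [map_add] at h
    simp only [taylor_monomial, ← smul_eq_C_mul, map_smul, smul_eq_mul, eval_monomial, map_one,
      map_neg, ← sub_eq_add_neg]
    linear_combination a * h

lemma eulerFunctional_taylor_add_one_add (f : R[X]) (x : R) :
    eulerFunctional R (taylor (x + 1) f) + eulerFunctional R (taylor (x - 1) f) =
      2 * f.eval x := by
  have h := eulerFunctional_taylor_one_add (taylor x f)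
  rwa [taylor_taylor, taylor_taylor, taylor_eval, zero_add, add_comm 1, neg_add_eq_sub] at h

lemma sum_two_mul_pow_mul_eval {i : R} (hi : i ^ 2 = -1) (f : R[X]) (N : ℕ) :
    ∑ k ∈ range N, 2 * i ^ k * f.eval (k : R) =
      i * eulerFunctional R f + eulerFunctional R (taylor (-1) f) -
        (i ^ (N + 1) * eulerFunctional R (taylor (N : R) f) +
          i ^ N * eulerFunctional R (taylor ((N : R) - 1) f)) := by
  induction N with
  | zero => simp
  | succ N ih =>
    rw [sum_range_succ, ih, Nat.cast_succ, add_sub_cancel_right]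
    linear_combination -i ^ N * eulerFunctional_taylor_add_one_add f (N : R) +
      i ^ N * eulerFunctional R (taylor ((N : R) + 1) f) * hi

lemma eulerFunctional_taylor_neg_one_X_pow [NoZeroDivisors R] (h2 : (2 : R) ≠ 0) {m : ℕ}
    (hm : Even m) (hm0 : m ≠ 0) : eulerFunctional R (taylor (-1) (X ^ m)) = 0 := by
  have hreflect : ((X + 1 : R[X]) ^ m).comp (-X) = (X - 1) ^ m := by
    rw [pow_comp, add_comp, X_comp, one_comp, ← hm.neg_pow]
    ring
  have h := eulerFunctional_X_add_one_pow_add (R := R) m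
  rw [map_add, ← eulerFunctional_comp_neg_X ((X + 1) ^ m), hreflect, zero_pow hm0, mul_zero,
    ← two_mul] at h
  rw [taylor_X_pow, C_neg, C_1, ← sub_eq_add_neg]
  exact (mul_eq_zero.mp h).resolve_left h2

end EulerFunctional

section CentralBinomPoly

variable {R : Type*} [CommRing R]

/-- The polynomial `∑ k ≤ n, C(n, k) (-4)^k a_k X^k`. When `2 n + 1 = 0` in `R`, the coefficient
`C(n, k) (-4)^k` plays the role of the central binomial coefficient `C(2k, k)`. -/
noncomputable def centralBinomPoly (n : ℕ) (a : ℕ → R) : R[X] :=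
  ∑ k ∈ range (n + 1), C ((n.choose k : R) * (-4) ^ k * a k) * X ^ k

lemma coeff_centralBinomPoly (n : ℕ) (a : ℕ → R) (k : ℕ) :
    (centralBinomPoly n a).coeff k = (n.choose k : R) * (-4) ^ k * a k := by
  rw [centralBinomPoly, finsetSum_coeff]
  simp only [coeff_C_mul_X_pow, sum_ite_eq, mem_range]
  split_ifs with hk
  · rfl
  · rw [Nat.choose_eq_zero_of_lt (by omega)]
    simp

lemma natDegree_centralBinomPoly_le (n : ℕ) (a : ℕ → R) :
    (centralBinomPoly n a).natDegree ≤ n :=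
  natDegree_sum_le_of_forall_le _ _ fun k hk =>
    (natDegree_C_mul_X_pow_le _ k).trans (Nat.lt_succ_iff.mp (mem_range.mp hk))

lemma centralBinomPoly_one (n : ℕ) :
    centralBinomPoly n (fun _ => (1 : R)) = (1 - 4 * X) ^ n := by
  rw [sub_eq_neg_add, add_pow, centralBinomPoly]
  refine sum_congr rfl fun k _ => ?_
  simp only [mul_one, one_pow, C_mul, C_pow, C_neg, C_ofNat, C_eq_natCast, ← neg_mul, mul_pow]
  ring

lemma X_mul_derivative_centralBinomPoly (n : ℕ) (a : ℕ → R) :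
    X * derivative (centralBinomPoly n a) = centralBinomPoly n fun k => k * a k := by
  ext k
  cases k with
  | zero => simp [coeff_centralBinomPoly]
  | succ k =>
    rw [coeff_X_mul, coeff_derivative, coeff_centralBinomPoly, coeff_centralBinomPoly]
    push_cast
    ring

section HalfInteger

variable {n : ℕ} (hn : 2 * (n : R) + 1 = 0)
include hn

lemma succ_mul_choose_mul_neg_four_pow_succ (k : ℕ) :
    ((k : R) + 1) * ((n.choose (k + 1) : R) * (-4) ^ (k + 1)) =
      (4 * k + 2) * ((n.choose k : R) * (-4) ^ k) := by
  have hchoose : (n.choose (k + 1) : R) * (k + 1) = n.choose k * (n - k) := by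
    rcases le_or_gt k n with hk | hk
    · have h := congrArg (Nat.cast : ℕ → R) (Nat.choose_succ_right_eq n k)
      push_cast [Nat.cast_sub hk] at h
      exact h
    · rw [Nat.choose_eq_zero_of_lt hk, Nat.choose_eq_zero_of_lt (by omega)]
      simp
  rw [pow_succ]
  linear_combination (-4) ^ k * (-4) * hchoose - 2 * (n.choose k : R) * (-4) ^ k * hn

lemma one_sub_four_X_mul_derivative_centralBinomPoly (a : ℕ → R) :
    (1 - 4 * X) * (X * derivative (centralBinomPoly n a)) - 2 * (X * centralBinomPoly n a) =
      centralBinomPoly n fun k => k * (a k - a (k - 1)) := by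
  rw [X_mul_derivative_centralBinomPoly, sub_mul, one_mul, mul_assoc, ← C_ofNat, ← C_ofNat]
  ext k
  cases k with
  | zero => simp [coeff_centralBinomPoly]
  | succ k =>
    simp only [coeff_sub, coeff_C_mul, coeff_X_mul, coeff_centralBinomPoly, Nat.add_sub_cancel]
    push_cast
    linear_combination a k * succ_mul_choose_mul_neg_four_pow_succ hn k

lemma derivative_one_sub_two_X_mul_centralBinomPoly_comp (a : ℕ → R) :
    X * (1 - X) * derivative ((1 - 2 * X) * (centralBinomPoly n a).comp (X * (1 - X))) =
      (centralBinomPoly n fun k => k * (a k - a (k - 1))).comp (X * (1 - X)) := by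
  rw [← one_sub_four_X_mul_derivative_centralBinomPoly hn]
  simp only [derivative_mul, derivative_comp, derivative_sub, derivative_one, derivative_X,
    derivative_ofNat, sub_comp, mul_comp, X_comp, one_comp, ofNat_comp]
  ring

end HalfInteger

lemma derivative_centralBinomPoly_comp (n : ℕ) (a : ℕ → R) :
    X * (1 - X) * derivative ((centralBinomPoly n a).comp (X * (1 - X))) =
      (1 - 2 * X) * (centralBinomPoly n fun k => k * a k).comp (X * (1 - X)) := by
  rw [← X_mul_derivative_centralBinomPoly]
  simp only [derivative_mul, derivative_comp, derivative_sub, derivative_one, derivative_X,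
    mul_comp, X_comp]
  ring

lemma natDegree_centralBinomPoly_comp_le (n : ℕ) (a : ℕ → R) :
    ((centralBinomPoly n a).comp (X * (1 - X))).natDegree ≤ 2 * n := by
  have hquad : (X * (1 - X) : R[X]).natDegree ≤ 2 := by compute_degree
  calc _ ≤ (centralBinomPoly n a).natDegree * (X * (1 - X) : R[X]).natDegree := natDegree_comp_le
    _ ≤ n * 2 := Nat.mul_le_mul (natDegree_centralBinomPoly_le n a) hquad
    _ = 2 * n := mul_comm n 2

lemma eval_centralBinomPoly_comp (n : ℕ) (a : ℕ → R) {x : R}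
    (hx : x * (1 - x) = 0) : ((centralBinomPoly n a).comp (X * (1 - X))).eval x = a 0 := by
  simp [eval_comp, hx, ← coeff_zero_eq_eval_zero, coeff_centralBinomPoly]

end CentralBinomPoly

section CentralBinomModP

variable {K : Type*} [Field K] {p : ℕ} [CharP K p]

lemma natCast_ne_zero_of_mem_Ico {k : ℕ} (hk : k ∈ Ico 1 p) : (k : K) ≠ 0 := by
  rw [Ne, CharP.cast_eq_zero_iff K p]
  exact Nat.not_dvd_of_pos_of_lt (mem_Ico.mp hk).1 (mem_Ico.mp hk).2

lemma two_ne_zero_of_odd_char (hodd : Odd p) : (2 : K) ≠ 0 :=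
  CharP.cast_ne_zero_of_ne_of_prime K Nat.prime_two (hodd.ne_two_of_dvd_nat dvd_rfl)

lemma two_mul_natCast_add_one_eq_zero {R : Type*} [CommRing R] [CharP R p] {n : ℕ}
    (hp : p = 2 * n + 1) : 2 * (n : R) + 1 = 0 := by
  exact_mod_cast hp ▸ CharP.cast_eq_zero R p

lemma cast_centralBinom_eq_choose_mul {n k : ℕ} (hp : p = 2 * n + 1) (hk : k < p) :
    (k.centralBinom : K) = (n.choose k : K) * (-4) ^ k := by
  induction k with
  | zero => simp
  | succ k ih =>
    have hk_ne : ((k + 1 : ℕ) : K) ≠ 0 :=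
      natCast_ne_zero_of_mem_Ico (mem_Ico.mpr ⟨Nat.succ_pos k, hk⟩)
    have hcentral := congrArg (Nat.cast : ℕ → K) (Nat.succ_mul_centralBinom_succ k)
    have hchoose := succ_mul_choose_mul_neg_four_pow_succ (R := K)
      (two_mul_natCast_add_one_eq_zero hp) k
    refine mul_left_cancel₀ hk_ne ?_
    push_cast at hcentral ⊢
    rw [hcentral, hchoose, ih (by omega)]
    ring

lemma sum_centralBinom_mul_eq_eval {n : ℕ} (hp : p = 2 * n + 1) (a : ℕ → K) (x : K) :
    ∑ k ∈ range p, (k.centralBinom : K) * a k * x ^ k = (centralBinomPoly n a).eval x := by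
  have hsub : range (n + 1) ⊆ range p := range_subset_range.mpr (by omega)
  rw [centralBinomPoly, eval_finsetSum]
  simp only [eval_C_mul, eval_X_pow]
  rw [sum_subset hsub fun k _ hk => by
    rw [Nat.choose_eq_zero_of_lt (by simpa using hk)]
    simp]
  exact sum_congr rfl fun k hk => by rw [cast_centralBinom_eq_choose_mul hp (mem_range.mp hk)]

lemma centralBinomPoly_natCast_mul_one_div {n : ℕ} (hn : n < p) :
    (centralBinomPoly n fun k => (k : K) * (1 / k)) = (1 - 4 * X) ^ n - 1 := by
  rw [← centralBinomPoly_one]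
  ext k
  rw [coeff_sub, coeff_centralBinomPoly, coeff_centralBinomPoly, coeff_one]
  rcases Nat.eq_zero_or_pos k with rfl | hk0
  · simp
  rcases le_or_gt k n with hk | hk
  · have hk_ne : (k : K) ≠ 0 := natCast_ne_zero_of_mem_Ico (mem_Ico.mpr ⟨hk0, hk.trans_lt hn⟩)
    rw [mul_one_div_cancel hk_ne, if_neg hk0.ne', sub_zero]
  · rw [Nat.choose_eq_zero_of_lt hk, if_neg hk0.ne']
    simp

end CentralBinomModP

section FinitePolylog

variable {K : Type*} [Field K]

/-- The finite polylogarithm `∑ 0 < k < p, z^k / k^s` at `z = (X - 1) / X`, homogenized by the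
factor `X ^ p`. -/
noncomputable def finitePolylog (K : Type*) [Field K] (p s : ℕ) : K[X] :=
  ∑ k ∈ Ico 1 p, C (1 / (k : K) ^ s) * (X ^ (p - k) * (X - 1) ^ k)

lemma natDegree_finitePolylog_le (p s : ℕ) : (finitePolylog K p s).natDegree ≤ p := by
  refine natDegree_sum_le_of_forall_le _ _ fun k hk => (natDegree_C_mul_le _ _).trans ?_
  have hk' := (mem_Ico.mp hk).2
  have hterm : (X ^ (p - k) * (X - 1) ^ k : K[X]).natDegree ≤ (p - k) + k := by
    compute_degree
  omega

lemma eval_zero_finitePolylog (p s : ℕ) : (finitePolylog K p s).eval 0 = 0 := by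
  rw [finitePolylog, eval_finsetSum]
  refine sum_eq_zero fun k hk => ?_
  have hk' : p - k ≠ 0 := (Nat.sub_pos_of_lt (mem_Ico.mp hk).2).ne'
  simp [hk']

lemma eval_one_finitePolylog (p s : ℕ) : (finitePolylog K p s).eval 1 = 0 := by
  rw [finitePolylog, eval_finsetSum]
  refine sum_eq_zero fun k hk => ?_
  have hk' : k ≠ 0 := Nat.one_le_iff_ne_zero.mp (mem_Ico.mp hk).1
  simp [hk']

lemma eval_finitePolylog_of_sub_one_eq (p s : ℕ) {x z : K}
    (hx : x - 1 = z * x) :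
    (finitePolylog K p s).eval x = x ^ p * ∑ k ∈ Ico 1 p, z ^ k / (k : K) ^ s := by
  rw [finitePolylog, eval_finsetSum, mul_sum]
  refine sum_congr rfl fun k hk => ?_
  simp only [eval_mul, eval_C, eval_pow, eval_X, eval_sub, eval_one, hx, mul_pow]
  rw [← pow_sub_mul_pow x (mem_Ico.mp hk).2.le]
  ring

lemma derivative_X_pow_mul_X_sub_one_pow {R : Type*} [CommRing R] (a b : ℕ) :
    (X : R[X]) * (1 - X) * derivative (X ^ a * (X - 1) ^ b) =
      ((a : R[X]) * (1 - X) - (b : R[X]) * X) * (X ^ a * (X - 1) ^ b) := by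
  rcases a with _ | a <;> rcases b with _ | b <;>
  · simp only [derivative_mul, derivative_pow, derivative_sub, derivative_X, derivative_one,
      C_eq_natCast, Nat.add_sub_cancel, pow_zero, Nat.cast_zero]
    push_cast
    ring

lemma derivative_finitePolylog_succ (p s : ℕ) [CharP K p] :
    X * (1 - X) * derivative (finitePolylog K p (s + 1)) = -finitePolylog K p s := by
  rw [finitePolylog, finitePolylog, derivative_sum, mul_sum, ← sum_neg_distrib]
  refine sum_congr rfl fun k hk => ?_
  have hcoeff : C (1 / (k : K) ^ (s + 1)) * (k : K[X]) = C (1 / (k : K) ^ s) := by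
    have hk0 : (k : K) ≠ 0 := natCast_ne_zero_of_mem_Ico hk
    rw [← C_eq_natCast, ← C_mul]
    congr 1
    field_simp
    rw [pow_succ']
  have hpk : ((p - k : ℕ) : K[X]) = -k := by
    rw [Nat.cast_sub (mem_Ico.mp hk).2.le, CharP.cast_eq_zero, zero_sub]
  rw [derivative_C_mul, mul_left_comm, derivative_X_pow_mul_X_sub_one_pow, hpk, ← hcoeff]
  ring

lemma finitePolylog_zero (p : ℕ) [Fact p.Prime] [CharP K p] : finitePolylog K p 0 = X - X ^ p := by
  have hp : 0 < p := (Fact.out : p.Prime).pos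
  have hgeom : ∑ k ∈ range p, (X - 1 : K[X]) ^ k * X ^ (p - 1 - k) = 1 := by
    have h := (Commute.all (X - 1 : K[X]) X).geom_sum₂_mul p
    rw [sub_pow_char, one_pow] at h
    linear_combination -h
  have hsum : ∑ k ∈ range p, (X ^ (p - k) * (X - 1) ^ k : K[X]) = X := by
    trans X * ∑ k ∈ range p, (X - 1 : K[X]) ^ k * X ^ (p - 1 - k)
    · rw [mul_sum]
      refine sum_congr rfl fun k hk => ?_
      have hk' := mem_range.mp hk
      rw [mul_left_comm, ← pow_succ', mul_comm, show p - 1 - k + 1 = p - k by omega]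
    · rw [hgeom, mul_one]
  rw [range_eq_Ico, sum_eq_sum_Ico_succ_bot hp] at hsum
  simp only [finitePolylog, pow_zero, div_one, C_1, one_mul]
  linear_combination hsum

end FinitePolylog

section HarmonicSq

variable {K : Type*} [Field K]

/-- The second-order harmonic number `H_n^{(2)}` formed in the field `K`. If `K` has characteristic
`p`, it is the reduction of `H2 n` only for `n < p`, as the terms with `p ∣ k` are `1 / 0 = 0`. -/
def harmonicSq (K : Type*) [Field K] (n : ℕ) : K := ∑ k ∈ Icc 1 n, 1 / (k : K) ^ 2

lemma natCast_mul_harmonicSq_sub (k : ℕ) :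
    (k : K) * (harmonicSq K k - harmonicSq K (k - 1)) = 1 / k := by
  cases k with
  | zero => simp
  | succ k =>
    rw [harmonicSq, harmonicSq, Nat.add_sub_cancel, sum_Icc_succ_top (Nat.le_add_left 1 k),
      add_sub_cancel_left]
    by_cases hk : ((k + 1 : ℕ) : K) = 0
    · simp [hk]
    · field_simp

end HarmonicSq

section CharP

variable {K : Type*} [Field K] {p : ℕ} [Fact p.Prime] [CharP K p]

lemma eq_zero_of_derivative_eq_zero_of_natDegree_le {R : Type*} [CommRing R] [IsDomain R]
    [CharP R p] {f : R[X]} (hdeg : f.natDegree ≤ p) (hf : derivative f = 0) (h0 : f.eval 0 = 0)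
    (h1 : f.eval 1 = 0) : f = 0 := by
  classical
  have hp : 0 < p := (Fact.out : p.Prime).pos
  obtain ⟨g, rfl⟩ : ∃ g, expand R p g = f := ⟨_, expand_contract p hf hp.ne'⟩
  rw [expand_eval, zero_pow hp.ne'] at h0
  rw [expand_eval, one_pow] at h1
  rw [natDegree_expand] at hdeg
  have hg : g.natDegree ≤ 1 := Nat.le_of_mul_le_mul_right (by simpa using hdeg) hp
  have hcard : g.natDegree < #({0, 1} : Finset R) := by
    rw [card_pair zero_ne_one]
    omega
  rw [eq_zero_of_natDegree_lt_card_of_eval_eq_zero' g {0, 1} (by simp [h0, h1]) hcard, map_zero]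

lemma eq_of_X_mul_one_sub_X_mul_derivative_eq {R : Type*} [CommRing R] [IsDomain R] [CharP R p]
    {f g : R[X]} (hf : f.natDegree ≤ p) (hg : g.natDegree ≤ p)
    (h : X * (1 - X) * derivative f = X * (1 - X) * derivative g)
    (h0 : f.eval 0 = g.eval 0) (h1 : f.eval 1 = g.eval 1) : f = g := by
  have hne : (X * (1 - X) : R[X]) ≠ 0 :=
    mul_ne_zero X_ne_zero fun h => by simpa using congrArg (eval 0) h
  refine sub_eq_zero.mp (eq_zero_of_derivative_eq_zero_of_natDegree_le (p := p)
    ((natDegree_sub_le f g).trans (max_le hf hg)) ?_ ?_ ?_)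
  · rw [derivative_sub, mul_left_cancel₀ hne h, sub_self]
  · rw [eval_sub, h0, sub_self]
  · rw [eval_sub, h1, sub_self]

lemma natCast_pow_char {R : Type*} [CommRing R] [CharP R p] (k : ℕ) : (k : R) ^ p = k := by
  simpa only [frobenius_def] using map_natCast (frobenius R p) k

lemma one_sub_two_mul_X_pow_char : (1 - 2 * X : K[X]) ^ p = 1 - 2 * X ^ p := by
  have h2 : (2 : K[X]) ^ p = 2 := by exact_mod_cast natCast_pow_char (R := K[X]) 2
  rw [sub_pow_char, one_pow, mul_pow, h2]

lemma centralBinomPoly_one_div_comp {n : ℕ} (hp : p = 2 * n + 1) :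
    (centralBinomPoly n fun k => 1 / (k : K)).comp (X * (1 - X)) =
      C (-2) * finitePolylog K p 1 := by
  refine eq_of_X_mul_one_sub_X_mul_derivative_eq (p := p)
    ((natDegree_centralBinomPoly_comp_le n _).trans (by omega))
    ((natDegree_C_mul_le _ _).trans (natDegree_finitePolylog_le p 1)) ?_ ?_ ?_
  · calc X * (1 - X) * derivative ((centralBinomPoly n fun k => 1 / (k : K)).comp (X * (1 - X)))
      _ = (1 - 2 * X) * ((1 - 2 * X) ^ (2 * n) - 1) := by
          rw [derivative_centralBinomPoly_comp, centralBinomPoly_natCast_mul_one_div (by omega)]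
          simp only [sub_comp, pow_comp, mul_comp, one_comp, ofNat_comp, X_comp, pow_mul]
          ring
      _ = (1 - 2 * X) ^ p - (1 - 2 * X) := by
          rw [hp]
          ring
      _ = 2 * (X - X ^ p) := by
          rw [one_sub_two_mul_X_pow_char]
          ring
      _ = X * (1 - X) * derivative (C (-2) * finitePolylog K p 1) := by
          rw [derivative_C_mul, mul_left_comm, derivative_finitePolylog_succ,
            finitePolylog_zero, C_neg, C_ofNat, neg_mul_neg]
  · rw [eval_centralBinomPoly_comp _ _ (by simp), eval_C_mul, eval_zero_finitePolylog]
    simp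
  · rw [eval_centralBinomPoly_comp _ _ (by simp), eval_C_mul, eval_one_finitePolylog]
    simp

theorem one_sub_two_X_mul_centralBinomPoly_harmonicSq_comp {n : ℕ} (hp : p = 2 * n + 1) :
    (1 - 2 * X) * (centralBinomPoly n (harmonicSq K)).comp (X * (1 - X)) =
      C 2 * finitePolylog K p 2 := by
  have hlinear : (1 - 2 * X : K[X]).natDegree ≤ 1 := by compute_degree
  refine eq_of_X_mul_one_sub_X_mul_derivative_eq (p := p) ?_
    ((natDegree_C_mul_le _ _).trans (natDegree_finitePolylog_le p 2)) ?_ ?_ ?_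
  · rw [hp, add_comm]
    exact natDegree_mul_le_of_le hlinear (natDegree_centralBinomPoly_comp_le n _)
  · rw [derivative_one_sub_two_X_mul_centralBinomPoly_comp (two_mul_natCast_add_one_eq_zero hp),
      derivative_C_mul, mul_left_comm, derivative_finitePolylog_succ]
    simp only [natCast_mul_harmonicSq_sub]
    rw [centralBinomPoly_one_div_comp hp, C_neg, neg_mul, mul_neg]
  · rw [eval_mul, eval_centralBinomPoly_comp _ _ (by simp), eval_C_mul, eval_zero_finitePolylog]
    simp [harmonicSq]
  · rw [eval_mul, eval_centralBinomPoly_comp _ _ (by simp), eval_C_mul, eval_one_finitePolylog]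
    simp [harmonicSq]

lemma inv_pow_eq_pow_of_mem_Ico {k s : ℕ} (hs : s < p) (hk : k ∈ Ico 1 p) :
    1 / (k : K) ^ s = (k : K) ^ (p - 1 - s) := by
  have hk0 : (k : K) ≠ 0 := natCast_ne_zero_of_mem_Ico hk
  rw [div_eq_iff (pow_ne_zero s hk0), ← pow_add, Nat.sub_add_cancel (Nat.le_sub_one_of_lt hs)]
  refine mul_right_cancel₀ hk0 ?_
  rw [pow_sub_one_mul (Fact.out : p.Prime).ne_zero, natCast_pow_char, one_mul]

lemma two_mul_sum_pow_div_pow {i : K} (hi : i ^ 2 = -1) (hodd : Odd p) {s : ℕ} (hs : Even s)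
    (hsp : s + 1 < p) :
    2 * ∑ k ∈ Ico 1 p, i ^ k / (k : K) ^ s = i * (1 - i ^ p) * eulerInt (p - 1 - s) := by
  have hm0 : p - 1 - s ≠ 0 := by omega
  have hm : Even (p - 1 - s) :=
    (Nat.even_sub (by omega)).mpr (iff_of_true (Nat.Odd.sub_odd hodd odd_one) hs)
  have h2 : (2 : K) ≠ 0 := two_ne_zero_of_odd_char hodd
  have hsum := sum_two_mul_pow_mul_eval hi (X ^ (p - 1 - s)) p
  simp only [CharP.cast_eq_zero, zero_sub, eulerFunctional_taylor_neg_one_X_pow h2 hm hm0,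
    taylor_zero, eulerFunctional_X_pow, eval_X_pow] at hsum
  rw [range_eq_Ico, sum_eq_sum_Ico_succ_bot (by omega), Nat.cast_zero, zero_pow hm0,
    mul_zero, zero_add] at hsum
  rw [mul_sum]
  trans ∑ k ∈ Ico 1 p, 2 * i ^ k * (k : K) ^ (p - 1 - s)
  · refine sum_congr rfl fun k hk => ?_
    rw [← inv_pow_eq_pow_of_mem_Ico (by omega) hk]
    ring
  · linear_combination hsum

theorem sum_centralBinom_mul_harmonicSq {i : K} (hi : i ^ 2 = -1) (hp3 : 3 < p) :
    ∑ k ∈ range p, (k.centralBinom : K) * harmonicSq K k * (1 / 2) ^ k = -eulerInt (p - 3) := by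
  have hodd : Odd p := (Fact.out : p.Prime).odd_of_ne_two (by omega)
  have ⟨n, hp⟩ := hodd
  have h2 : (2 : K) ≠ 0 := two_ne_zero_of_odd_char hodd
  have hi0 : i ≠ 0 := by
    rintro rfl
    norm_num at hi
  obtain ⟨x, hx⟩ : ∃ x : K, 2 * x = 1 + i := ⟨(1 + i) / 2, mul_div_cancel₀ _ h2⟩
  have hx_quad : x * (1 - x) = 1 / 2 := by
    field_simp
    refine mul_left_cancel₀ h2 ?_
    linear_combination (1 - i - 2 * x) * hx - hi
  have hx_sub : x - 1 = i * x := by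
    refine mul_left_cancel₀ h2 ?_
    linear_combination (1 - i) * hx - hi
  have hx_lin : 1 - 2 * x = -i := by rw [hx, sub_add_cancel_left]
  have hx_pow : 2 * x ^ p = 1 + i ^ p := by
    have h2_pow : (2 : K) ^ p = 2 := by exact_mod_cast natCast_pow_char (R := K) 2
    rw [← h2_pow, ← mul_pow, hx, add_pow_char, one_pow]
  have hi_pow : (i ^ p) ^ 2 = -1 := by rw [pow_right_comm, hi, hodd.neg_one_pow]
  have hpolylog := two_mul_sum_pow_div_pow hi hodd even_two (by omega)
  rw [Nat.sub_sub] at hpolylog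
  have heval := congrArg (eval x) (one_sub_two_X_mul_centralBinomPoly_harmonicSq_comp (K := K) hp)
  simp only [eval_mul, eval_sub, eval_one, eval_ofNat, eval_X, eval_comp, eval_C, hx_quad, hx_lin,
    eval_finitePolylog_of_sub_one_eq p 2 hx_sub] at heval
  rw [sum_centralBinom_mul_eq_eval hp]
  refine mul_left_cancel₀ (mul_ne_zero h2 (neg_ne_zero.mpr hi0)) ?_
  linear_combination 2 * heval + 2 * x ^ p * hpolylog +
    i * eulerInt (p - 3) * ((1 - i ^ p) * hx_pow - hi_pow)

end CharP

section ReductionGraph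

variable (K : Type*) [Field K]

/-- The graph of the reduction map to the field `K`, which is defined on the rational numbers with a
denominator that is nonzero in `K`. As a subring it carries congruences between rational numbers
through sums, products and quotients. -/
def reductionGraph : Subring (ℚ × K) where
  carrier := {z | ∃ N D : ℤ, (D : K) ≠ 0 ∧ z.1 * D = N ∧ z.2 * D = N}
  zero_mem' := ⟨0, 1, by simp, by simp, by simp⟩
  one_mem' := ⟨1, 1, by simp, by simp, by simp⟩
  neg_mem' := by
    rintro z ⟨N, D, hD, h1, h2⟩
    exact ⟨-N, D, hD, by simp [h1], by simp [h2]⟩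
  add_mem' := by
    rintro z w ⟨N, D, hD, h1, h2⟩ ⟨N', D', hD', h1', h2'⟩
    refine ⟨N * D' + N' * D, D * D', by simp [hD, hD'], ?_, ?_⟩
    · push_cast [Prod.fst_add]
      linear_combination (D' : ℚ) * h1 + D * h1'
    · push_cast [Prod.snd_add]
      linear_combination (D' : K) * h2 + D * h2'
  mul_mem' := by
    rintro z w ⟨N, D, hD, h1, h2⟩ ⟨N', D', hD', h1', h2'⟩
    refine ⟨N * N', D * D', by simp [hD, hD'], ?_, ?_⟩
    · push_cast [Prod.fst_mul]
      rw [mul_mul_mul_comm, h1, h1']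
    · push_cast [Prod.snd_mul]
      rw [mul_mul_mul_comm, h2, h2']

variable {K}

lemma div_mem_reductionGraph {z w : ℚ × K} (hz : z ∈ reductionGraph K) (hw : w ∈ reductionGraph K)
    (hw0 : w.2 ≠ 0) : z / w ∈ reductionGraph K := by
  obtain ⟨N, D, hD, h1, h2⟩ := hz
  obtain ⟨N', D', hD', h1', h2'⟩ := hw
  have hN' : (N' : K) ≠ 0 := h2' ▸ mul_ne_zero hw0 hD'
  have hw1 : w.1 ≠ 0 := by
    intro h
    rw [h, zero_mul, eq_comm, Int.cast_eq_zero] at h1'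
    exact hN' (by rw [h1', Int.cast_zero])
  refine ⟨N * D', D * N', by simp [hD, hN'], ?_, ?_⟩
  · push_cast [Prod.fst_div]
    rw [← h1, ← h1']
    field_simp
  · push_cast [Prod.snd_div]
    rw [← h2, ← h2']
    field_simp

lemma sum_mem_reductionGraph {ι : Type*} {s : Finset ι} {f : ι → ℚ} {g : ι → K}
    (h : ∀ k ∈ s, (f k, g k) ∈ reductionGraph K) :
    (∑ k ∈ s, f k, ∑ k ∈ s, g k) ∈ reductionGraph K := by
  rw [prod_mk_sum]
  exact sum_mem h

lemma dvd_num_of_mem_reductionGraph {p : ℕ} (hp : p.Prime) [CharP K p] {a : ℚ}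
    (h : (a, (0 : K)) ∈ reductionGraph K) : (p : ℤ) ∣ a.num := by
  obtain ⟨N, D, hD, h1, h2⟩ := h
  rw [zero_mul, eq_comm, CharP.intCast_eq_zero_iff K p] at h2
  rw [Ne, CharP.intCast_eq_zero_iff K p] at hD
  have hnum : a.num * D = N * a.den := by
    have hcast : (a.num : ℚ) * D = N * a.den := by
      rw [← Rat.mul_den_eq_num, ← h1]
      ring
    exact_mod_cast hcast
  have hdvd : (p : ℤ) ∣ a.num * D := hnum ▸ h2.mul_right _
  exact ((Nat.prime_iff_prime_int.mp hp).dvd_or_dvd hdvd).resolve_right hD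

lemma H2_harmonicSq_mem_reductionGraph {p k : ℕ} [CharP K p] (hk : k < p) :
    (H2 k, harmonicSq K k) ∈ reductionGraph K := by
  refine sum_mem_reductionGraph fun j hj => ?_
  have hj_ne : (j : K) ^ 2 ≠ 0 := pow_ne_zero 2 <| natCast_ne_zero_of_mem_Ico (p := p) <|
    mem_Ico.mpr ⟨(mem_Icc.mp hj).1, (mem_Icc.mp hj).2.trans_lt hk⟩
  exact div_mem_reductionGraph (one_mem _) (pow_mem (natCast_mem _ j) 2) hj_ne

lemma choose_div_two_pow_mul_H2_mem_reductionGraph {p k : ℕ} [CharP K p] (hodd : Odd p)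
    (hk : k < p) :
    (((2 * k).choose k : ℚ) / 2 ^ k * H2 k, (k.centralBinom : K) * harmonicSq K k * (1 / 2) ^ k) ∈
      reductionGraph K := by
  have h2 : (2 : K) ^ k ≠ 0 := pow_ne_zero k (two_ne_zero_of_odd_char hodd)
  have hbinom : (((2 * k).choose k : ℚ) / 2 ^ k, (k.centralBinom : K) / 2 ^ k) ∈
      reductionGraph K :=
    div_mem_reductionGraph (natCast_mem _ k.centralBinom) (pow_mem (ofNat_mem _ 2) k) h2
  convert! mul_mem hbinom (H2_harmonicSq_mem_reductionGraph hk) using 2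
  rw [Prod.snd_mul, one_div_pow]
  ring

lemma eulerNumber_eulerInt_mem_reductionGraph (n : ℕ) :
    (eulerNumber n, (eulerInt n : K)) ∈ reductionGraph K := by
  rw [← cast_eulerInt]
  exact intCast_mem _ (eulerInt n)

end ReductionGraph

theorem stmt1 (p : ℕ) (hp : p.Prime) (hp3 : 3 < p) :
    ratModEq p (∑ k ∈ Finset.range p, ((2 * k).choose k : ℚ) / 2 ^ k * H2 k)
      (-eulerNumber (p - 3)) := by
  have : Fact p.Prime := ⟨hp⟩
  let K := AlgebraicClosure (ZMod p)
  have : CharP K p := charP_of_injective_algebraMap (algebraMap (ZMod p) K).injective p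
  obtain ⟨i, hi⟩ := IsAlgClosed.exists_pow_nat_eq (-1 : K) (n := 2) two_pos
  have hodd : Odd p := hp.odd_of_ne_two (by omega)
  have hsum := sum_mem_reductionGraph (K := K) fun k hk =>
    choose_div_two_pow_mul_H2_mem_reductionGraph hodd (mem_range.mp hk)
  rw [sum_centralBinom_mul_harmonicSq hi hp3] at hsum
  have hdiff := sub_mem hsum (neg_mem (eulerNumber_eulerInt_mem_reductionGraph (p - 3)))
  exact dvd_num_of_mem_reductionGraph (K := K) hp (by simpa using hdiff)
end

section
/- Let p > 3 be a prime. Then ∑_{k=1}^{p-1} (C(2k,k)/4^k) · H_k ≡ 2 − 2p + 4p²·q_p(2) (mod p³), where q_p(2) = (2^{p-1} − 1)/p. -/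
/-!
The sum has the closed form `2 + 2p · (C(2p,p) / 4^p) · (H_{p-1} - 2)`. Pairing `k` with `p - k`
gives `2 H_{p-1} ≡ -p ∑ 1/k² (mod p²)`, and `∑ 1/k² ≡ 0 (mod p)` is a power sum over `(ℤ/p)ˣ`, so
`H_{p-1}` vanishes modulo `p²` (Wolstenholme) and it suffices to know `C(2p,p) / 4^p` modulo `p²`.
Writing `q = q_p(2)`, we have `C(2p,p) = ∑ C(p,i)² ≡ 2 (mod p²)` and `4^p = 4 (1 + p q)²`, whence
`C(2p,p) / 4^p ≡ 1/2 - p q (mod p²)`.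
-/

theorem ratModEq_natCast_iff {m a b : ℕ} : ratModEq m a b ↔ a ≡ b [MOD m] := by
  rw [Nat.ModEq.comm, Nat.modEq_iff_dvd, ratModEq]
  exact_mod_cast Iff.rfl

theorem H_succ (n : ℕ) : H (n + 1) = H n + 1 / (n + 1) := by
  rw [H, Finset.sum_Icc_succ_top (by lia), ← H, Nat.cast_succ]

theorem sum_centralBinom_div_four_pow_mul_H (n : ℕ) :
    ∑ k ∈ Finset.Icc 1 n, (k.centralBinom : ℚ) / 4 ^ k * H k =
      2 + 2 * (n + 1 : ℕ) * ((n + 1).centralBinom / 4 ^ (n + 1)) * (H n - 2) := by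
  induction n with
  | zero => norm_num [H, Nat.centralBinom, Nat.choose]
  | succ n ih =>
    have centralBinom_rec : ((n + 1 + 1 : ℕ) : ℚ) * (n + 1 + 1).centralBinom =
        2 * (2 * (n + 1) + 1) * (n + 1).centralBinom :=
      mod_cast Nat.succ_mul_centralBinom_succ (n + 1)
    have step : 2 * ((n + 1 + 1 : ℕ) : ℚ) * ((n + 1 + 1).centralBinom / 4 ^ (n + 1 + 1)) =
        (2 * (n + 1) + 1) * ((n + 1).centralBinom / 4 ^ (n + 1)) := by
      rw [pow_succ _ (n + 1)]
      linear_combination (2 / (4 ^ (n + 1) * 4)) * centralBinom_rec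
    rw [Finset.sum_Icc_succ_top (by lia), ih, step, H_succ]
    push_cast
    field

theorem two_mul_H_sub_one (n : ℕ) :
    2 * H (n - 1) =
      n ^ 2 * ∑ k ∈ Finset.Icc 1 (n - 1), ((k ^ 2 * (n - k) : ℕ) : ℚ)⁻¹ - n * H2 (n - 1) := by
  have reflect : H (n - 1) = ∑ k ∈ Finset.Icc 1 (n - 1), 1 / ((n - k : ℕ) : ℚ) :=
    Finset.sum_nbij' (n - ·) (n - ·) (by grind) (by grind) (by grind) (by grind)
      fun k hk ↦ by rw [Nat.sub_sub_self (by grind)]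
  have pairing : ∀ k ∈ Finset.Icc 1 (n - 1), (1 : ℚ) / k + 1 / (n - k : ℕ) =
      n ^ 2 * ((k ^ 2 * (n - k) : ℕ) : ℚ)⁻¹ - n * (1 / k ^ 2) := by
    intro k hk
    have hk0 : (k : ℚ) ≠ 0 := Nat.cast_ne_zero.2 (by grind)
    have hnk0 : ((n - k : ℕ) : ℚ) ≠ 0 := Nat.cast_ne_zero.2 (by grind)
    have hn : (n : ℚ) = k + (n - k : ℕ) := mod_cast (Nat.add_sub_of_le (by grind)).symm
    rw [Nat.cast_mul, hn]
    push_cast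
    field
  calc 2 * H (n - 1) = ∑ k ∈ Finset.Icc 1 (n - 1), ((1 : ℚ) / k + 1 / (n - k : ℕ)) := by
        rw [Finset.sum_add_distrib, ← reflect, ← H, two_mul]
    _ = _ := by
        rw [Finset.sum_congr rfl pairing, Finset.sum_sub_distrib, ← Finset.mul_sum,
          ← Finset.mul_sum, ← H2]

/-- The ring `ℤ_(p)` of `p`-integral rationals, i.e. those with denominator prime to `p`. A
congruence `a ≡ b (mod p ^ r)` says that `(a - b) / p ^ r` lies in this ring, which reduces
calculations with congruences to identities in `ℚ`. -/
abbrev pIntegers (p : ℕ) [Fact p.Prime] : Subring ℚ := (Rat.padicValuation p).integer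

/-- The Fermat quotient `q_p(a) = (a ^ (p - 1) - 1) / p`, as a rational number. -/
def fermatQuotient (p a : ℕ) : ℚ := ((a : ℚ) ^ (p - 1) - 1) / p

theorem pow_sub_one_eq_one_add_mul_fermatQuotient {n : ℕ} (hn : n ≠ 0) (a : ℕ) :
    (a : ℚ) ^ (n - 1) = 1 + n * fermatQuotient n a := by
  have hn0 : (n : ℚ) ≠ 0 := Nat.cast_ne_zero.2 hn
  rw [fermatQuotient]
  field

theorem four_pow_eq_four_mul_sq {n : ℕ} (hn : n ≠ 0) :
    (4 : ℚ) ^ n = 4 * (1 + n * fermatQuotient n 2) ^ 2 :=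
  calc (4 : ℚ) ^ n = 4 * (2 ^ 2) ^ (n - 1) := by
        norm_num [← pow_succ', Nat.sub_add_cancel (Nat.one_le_iff_ne_zero.2 hn)]
    _ = 4 * ((2 : ℕ) ^ (n - 1)) ^ 2 := by rw [pow_right_comm, Nat.cast_two]
    _ = _ := by rw [pow_sub_one_eq_one_add_mul_fermatQuotient hn]

section PrimeModulus

variable {p : ℕ} [hp : Fact p.Prime]

theorem mem_pIntegers_iff {x : ℚ} : x ∈ pIntegers p ↔ ¬p ∣ x.den :=
  Rat.padicValuation_le_one_iff

theorem inv_natCast_mem_pIntegers {n : ℕ} (hn : ¬p ∣ n) : (n : ℚ)⁻¹ ∈ pIntegers p :=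
  mem_pIntegers_iff.2 <| by
    rwa [Rat.inv_natCast_den_of_pos (Nat.pos_of_ne_zero (by rintro rfl; simp at hn))]

theorem ratModEq_pow_iff {r : ℕ} (hr : r ≠ 0) {a b : ℚ} :
    ratModEq (p ^ r) a b ↔ (a - b) / p ^ r ∈ pIntegers p := by
  have hp0 : (p : ℚ) ≠ 0 := Nat.cast_ne_zero.2 hp.out.ne_zero
  rw [ratModEq]
  set x := a - b
  constructor
  · rintro ⟨y, hy⟩
    have hden : ¬p ∣ x.den := fun h ↦ hp.out.not_dvd_one <| x.reduced ▸
      Nat.dvd_gcd (Int.natCast_dvd.1 ((dvd_pow_self _ hr).natCast.trans ⟨y, hy⟩)) h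
    have hx : x / p ^ r = y * (x.den : ℚ)⁻¹ := by
      nth_rewrite 1 [← Rat.num_div_den x]
      rw [hy]
      push_cast
      field
    rw [hx]
    exact mul_mem (intCast_mem _ y) (inv_natCast_mem_pIntegers hden)
  · intro h
    set y := x / p ^ r with hy
    have hcop : IsCoprime ((p ^ r : ℕ) : ℤ) y.den :=
      Nat.isCoprime_iff_coprime.2 <|
        ((Nat.Prime.coprime_iff_not_dvd hp.out).2 (mem_pIntegers_iff.1 h)).pow_left r
    have cross : x.num * y.den = (p ^ r : ℕ) * (y.num * x.den) := by
      have hxy : x = p ^ r * y := by rw [hy]; field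
      have : (x.num : ℚ) * y.den = p ^ r * (y.num * x.den) := by
        rw [← Rat.mul_den_eq_num x, ← Rat.mul_den_eq_num y]
        linear_combination (x.den * y.den : ℚ) * hxy
      exact_mod_cast this
    exact hcop.dvd_of_dvd_mul_right ⟨_, cross⟩

theorem ratModEq_prime_iff {a b : ℚ} : ratModEq p a b ↔ (a - b) / p ∈ pIntegers p := by
  simpa only [pow_one] using ratModEq_pow_iff (p := p) one_ne_zero (a := a) (b := b)

theorem fermatQuotient_mem_pIntegers {a : ℕ} (ha : ¬p ∣ a) : fermatQuotient p a ∈ pIntegers p := by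
  have fermat : a ^ (p - 1) ≡ 1 [MOD p] := by
    rw [← Nat.totient_prime hp.out]
    exact Nat.ModEq.pow_totient ((Nat.Prime.coprime_iff_not_dvd hp.out).2 ha).symm
  simpa [fermatQuotient] using ratModEq_prime_iff.1 (ratModEq_natCast_iff.2 fermat)

theorem inv_ratModEq_pow_sub_two {a : ℕ} (ha : ¬p ∣ a) :
    ratModEq p (a : ℚ)⁻¹ ((a : ℚ) ^ (p - 2)) := by
  have ha0 : (a : ℚ) ≠ 0 := Nat.cast_ne_zero.2 (by rintro rfl; simp at ha)
  have hpow : (a : ℚ) ^ (p - 2) * a = a ^ (p - 1) := by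
    rw [← pow_succ, show p - 2 + 1 = p - 1 by have := hp.out.two_le; lia]
  have quotient : ((a : ℚ)⁻¹ - a ^ (p - 2)) / p = -((a : ℚ)⁻¹ * fermatQuotient p a) := by
    rw [fermatQuotient, ← hpow]
    field
  rw [ratModEq_prime_iff, quotient]
  exact neg_mem (mul_mem (inv_natCast_mem_pIntegers ha) (fermatQuotient_mem_pIntegers ha))

theorem sum_Icc_natCast_zmod {M : Type*} [AddCommMonoid M] (f : ZMod p → M) :
    ∑ k ∈ Finset.Icc 1 (p - 1), f k = ∑ u : (ZMod p)ˣ, f u := by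
  symm
  refine Finset.sum_bij (fun u _ ↦ (u : ZMod p).val) (fun u _ ↦ ?_)
    (fun u _ v _ huv ↦ Units.ext (ZMod.val_injective p huv)) (fun k hk ↦ ?_) (by simp)
  · have hpos : (u : ZMod p).val ≠ 0 := (ZMod.val_ne_zero _).2 u.ne_zero
    have hlt := ZMod.val_lt (u : ZMod p)
    grind
  · obtain ⟨hk1, hkp⟩ : 1 ≤ k ∧ k < p := by grind
    have hk0 : (k : ZMod p) ≠ 0 :=
      mt (ZMod.natCast_eq_zero_iff k p).1 (Nat.not_dvd_of_pos_of_lt hk1 hkp)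
    exact ⟨Units.mk0 k hk0, Finset.mem_univ _, ZMod.val_cast_of_lt hkp⟩

theorem prime_dvd_sum_pow {m : ℕ} (hm : ¬p - 1 ∣ m) : p ∣ ∑ k ∈ Finset.Icc 1 (p - 1), k ^ m := by
  rw [← ZMod.natCast_eq_zero_iff]
  push_cast
  rw [sum_Icc_natCast_zmod (· ^ m), FiniteField.sum_pow_units, ZMod.card, if_neg hm]

theorem sum_one_div_pow_ratModEq_zero {m : ℕ} (hm : ¬p - 1 ∣ m) :
    ratModEq p (∑ k ∈ Finset.Icc 1 (p - 1), (1 : ℚ) / k ^ m) 0 := by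
  have hm' : ¬p - 1 ∣ m * (p - 2) := by
    have hcop : (p - 1).Coprime (p - 2) := by
      rw [show p - 1 = p - 2 + 1 by have := hp.out.two_le; lia]
      simp
    rwa [hcop.dvd_mul_right]
  have hpow : ratModEq p (∑ k ∈ Finset.Icc 1 (p - 1), k ^ (m * (p - 2)) : ℕ) (0 : ℕ) :=
    ratModEq_natCast_iff.2 (Nat.modEq_zero_iff_dvd.2 (prime_dvd_sum_pow hm'))
  have hinv : ∀ k ∈ Finset.Icc 1 (p - 1),
      ((1 : ℚ) / k ^ m - k ^ (m * (p - 2))) / p ∈ pIntegers p := by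
    intro k hk
    have hkp : ¬p ∣ k ^ m :=
      mt hp.out.dvd_of_dvd_pow (Nat.not_dvd_of_pos_of_lt (by grind) (by grind))
    simpa [pow_mul] using ratModEq_prime_iff.1 (inv_ratModEq_pow_sub_two hkp)
  rw [ratModEq_prime_iff] at hpow ⊢
  convert add_mem (sum_mem hinv) hpow using 1
  rw [← Finset.sum_div, Finset.sum_sub_distrib]
  push_cast
  ring

theorem H2_sub_one_ratModEq_zero (hp3 : 3 < p) : ratModEq p (H2 (p - 1)) 0 :=
  sum_one_div_pow_ratModEq_zero fun h ↦ by have := Nat.le_of_dvd two_pos h; lia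

theorem H_sub_one_ratModEq_zero (hp3 : 3 < p) : ratModEq (p ^ 2) (H (p - 1)) 0 := by
  have hp0 : (p : ℚ) ≠ 0 := Nat.cast_ne_zero.2 hp.out.ne_zero
  have hH2 : H2 (p - 1) / p ∈ pIntegers p := by
    simpa using ratModEq_prime_iff.1 (H2_sub_one_ratModEq_zero hp3)
  have hsum : ∑ k ∈ Finset.Icc 1 (p - 1), ((k ^ 2 * (p - k) : ℕ) : ℚ)⁻¹ ∈ pIntegers p := by
    refine sum_mem fun k hk ↦ inv_natCast_mem_pIntegers ?_
    rw [hp.out.dvd_mul, not_or]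
    exact ⟨mt hp.out.dvd_of_dvd_pow (Nat.not_dvd_of_pos_of_lt (by grind) (by grind)),
      Nat.not_dvd_of_pos_of_lt (by grind) (by grind)⟩
  have htwo : ((2 : ℕ) : ℚ)⁻¹ ∈ pIntegers p :=
    inv_natCast_mem_pIntegers (Nat.not_dvd_of_pos_of_lt two_pos (by lia))
  rw [ratModEq_pow_iff two_ne_zero]
  convert mul_mem htwo (sub_mem hsum hH2) using 1
  rw [eq_div_of_mul_eq two_ne_zero ((mul_comm _ _).trans (two_mul_H_sub_one p))]
  field

theorem not_dvd_four_pow (hp2 : p ≠ 2) (n : ℕ) : ¬p ∣ 4 ^ n := by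
  rw [show 4 = 2 ^ 2 by rfl, ← pow_mul]
  exact mt hp.out.dvd_of_dvd_pow ((Nat.prime_dvd_prime_iff_eq hp.out Nat.prime_two).not.2 hp2)

theorem centralBinom_div_four_pow_mem_pIntegers (hp2 : p ≠ 2) (n : ℕ) :
    (n.centralBinom : ℚ) / 4 ^ n ∈ pIntegers p := by
  simpa [div_eq_mul_inv] using mul_mem (natCast_mem (pIntegers p) n.centralBinom)
    (inv_natCast_mem_pIntegers (not_dvd_four_pow hp2 n))

theorem centralBinom_prime_modEq : p.centralBinom ≡ 2 [MOD p ^ 2] := by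
  have inner : p ^ 2 ∣ ∑ i ∈ Finset.range (p - 1), p.choose (i + 1) ^ 2 :=
    Finset.dvd_sum fun i hi ↦
      pow_dvd_pow_of_dvd (hp.out.dvd_choose_self (by lia) (by grind)) 2
  have split : p.centralBinom = ∑ i ∈ Finset.range (p - 1), p.choose (i + 1) ^ 2 + 2 := by
    obtain ⟨n, rfl⟩ : ∃ n, p = n + 1 := ⟨p - 1, (Nat.sub_add_cancel hp.out.one_le).symm⟩
    rw [Nat.centralBinom, ← Nat.sum_range_choose_sq, Finset.sum_range_succ,
      Finset.sum_range_succ']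
    simp
  rw [split]
  simpa using (Nat.modEq_zero_iff_dvd.2 inner).add_right 2

theorem centralBinom_div_four_pow_ratModEq (hp2 : p ≠ 2) :
    ratModEq (p ^ 2) (p.centralBinom / 4 ^ p) (1 / 2 - p * fermatQuotient p 2) := by
  have hp0 : (p : ℚ) ≠ 0 := Nat.cast_ne_zero.2 hp.out.ne_zero
  have htwo : ¬p ∣ 2 := (Nat.prime_dvd_prime_iff_eq hp.out Nat.prime_two).not.2 hp2
  have hbinom : ((p.centralBinom : ℚ) - 2) / p ^ 2 ∈ pIntegers p :=
    mod_cast (ratModEq_pow_iff two_ne_zero).1 (ratModEq_natCast_iff.2 centralBinom_prime_modEq)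
  have hq : fermatQuotient p 2 ∈ pIntegers p := fermatQuotient_mem_pIntegers htwo
  have four_pow := four_pow_eq_four_mul_sq hp.out.ne_zero
  set q := fermatQuotient p 2
  have expand : (p.centralBinom / 4 ^ p - (1 / 2 - p * q)) / p ^ 2 =
      ((4 ^ p : ℕ) : ℚ)⁻¹ * ((p.centralBinom - 2) / p ^ 2 + (6 * q ^ 2 + 4 * p * q ^ 3)) := by
    have hq0 : 1 + p * q ≠ 0 := fun h ↦ by simp [h] at four_pow
    push_cast
    rw [four_pow]
    field
  rw [ratModEq_pow_iff two_ne_zero, expand]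
  exact mul_mem (inv_natCast_mem_pIntegers (not_dvd_four_pow hp2 p)) <| add_mem hbinom <| add_mem
    (mul_mem (ofNat_mem _ 6) (pow_mem hq 2))
    (mul_mem (mul_mem (ofNat_mem _ 4) (natCast_mem _ p)) (pow_mem hq 3))

end PrimeModulus

theorem stmt4 (p : ℕ) (hp : p.Prime) (hp3 : 3 < p) :
    ratModEq (p ^ 3) (∑ k ∈ Finset.Icc 1 (p - 1), ((2 * k).choose k : ℚ) / 4 ^ k * H k)
      (2 - 2 * p + 4 * p ^ 2 * (((2 : ℚ) ^ (p - 1) - 1) / p)) := by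
  have : Fact p.Prime := ⟨hp⟩
  have hp0 : (p : ℚ) ≠ 0 := Nat.cast_ne_zero.2 hp.ne_zero
  have closed_form := sum_centralBinom_div_four_pow_mul_H (p - 1)
  rw [Nat.sub_add_cancel hp.one_le] at closed_form
  have hH : H (p - 1) / p ^ 2 ∈ pIntegers p := by
    simpa using (ratModEq_pow_iff two_ne_zero).1 (H_sub_one_ratModEq_zero hp3)
  have hA : (p.centralBinom : ℚ) / 4 ^ p ∈ pIntegers p :=
    centralBinom_div_four_pow_mem_pIntegers (by lia) p
  have hA_congr := (ratModEq_pow_iff two_ne_zero).1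
    (centralBinom_div_four_pow_ratModEq (show p ≠ 2 by lia))
  change ratModEq _ (∑ k ∈ _, (k.centralBinom : ℚ) / 4 ^ k * H k)
    (2 - 2 * p + 4 * p ^ 2 * fermatQuotient p 2)
  rw [closed_form, ratModEq_pow_iff three_ne_zero]
  convert sub_mem (mul_mem (mul_mem (ofNat_mem _ 2) hA) hH)
    (mul_mem (ofNat_mem _ 4) hA_congr) using 1
  field
end

section
/- Let p be an odd prime. Then ∑_{k=0}^{(p-1)/2} (C(2k,k)/4^k) · H_k^{(2)} ≡ −4·q_p(2) (mod p), where q_p(2) = (2^{p-1} − 1)/p. -/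
/-!
Let `p = 2n + 1`. Modulo `p` we have `n ≡ -1/2`, hence `C(2k,k) / 4^k = (-1)^k C(-1/2, k)` is
congruent to `(-1)^k C(n, k)`, and the sum is congruent to the binomial transform
`T = ∑ (-1)^k C(n, k) H_k^{(2)}`. Since `n T = -H_n`, this gives
`T ≡ T - p T = -2 n T = 2 H_n`, and `H_n ≡ -2 q_p(2)` by a classical congruence of Eisenstein,
which comes from `2 q_p(2) = ∑_{j < p-1} C(p-1, j) / (j+1)`, `C(p-1, j) ≡ (-1)^j`, the
Botez–Catalan identity `∑_{j < 2n} (-1)^j / (j+1) = H_{2n} - H_n` and `H_{p-1} ≡ 0`.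
-/

open Finset

section BinomialIdentities

theorem choose_div_add_one {K : Type*} [Field K] [CharZero K] (n j : ℕ) :
    (n.choose j : K) / (j + 1) = (n + 1).choose (j + 1) / (n + 1) := by
  rw [div_eq_div_iff j.cast_add_one_ne_zero n.cast_add_one_ne_zero, mul_comm]
  exact_mod_cast Nat.add_one_mul_choose_eq n j

theorem add_one_mul_cast_choose_succ {R : Type*} [Ring R] (n k : ℕ) :
    ((k : R) + 1) * n.choose (k + 1) = (n - k) * n.choose k := by
  rcases le_or_gt k n with hkn | hnk
  · rw [← Nat.cast_succ, ← Nat.cast_sub hkn, ← Nat.cast_mul, ← Nat.cast_mul, Nat.mul_comm,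
      Nat.choose_succ_right_eq, Nat.mul_comm]
  · simp [Nat.choose_eq_zero_of_lt hnk, Nat.choose_eq_zero_of_lt (hnk.trans k.lt_succ_self)]

/-- Both sides are the integral of `(t + 1) ^ n` from `0` to `x`. -/
theorem sum_choose_mul_pow_div_add_one {K : Type*} [Field K] [CharZero K] (x : K) (n : ℕ) :
    ∑ j ∈ range (n + 1), (n.choose j : K) * x ^ (j + 1) / (j + 1) =
      ((x + 1) ^ (n + 1) - 1) / (n + 1) := by
  have binomial : (x + 1) ^ (n + 1) - 1 =
      ∑ j ∈ range (n + 1), ((n + 1).choose (j + 1) : K) * x ^ (j + 1) := by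
    rw [add_pow, sum_range_succ']
    simp [mul_comm]
  rw [binomial, sum_div]
  refine sum_congr rfl fun j _ ↦ ?_
  rw [mul_div_right_comm, choose_div_add_one, div_mul_eq_mul_div]

theorem sum_neg_one_pow_mul_choose_div_add_one (n : ℕ) :
    ∑ j ∈ range (n + 1), (-1 : ℚ) ^ j * n.choose j / (j + 1) = 1 / (n + 1) := by
  have integral := sum_choose_mul_pow_div_add_one (-1 : ℚ) n
  rw [neg_add_cancel, zero_pow n.succ_ne_zero, zero_sub, neg_div] at integral
  rw [← neg_inj, ← integral, ← sum_neg_distrib]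
  exact sum_congr rfl fun j _ ↦ by ring

theorem sum_choose_div_add_one_eq_two_mul (n : ℕ) :
    ∑ j ∈ range n, (n.choose j : ℚ) / (j + 1) = 2 * ((2 ^ n - 1) / (n + 1)) := by
  have integral := sum_choose_mul_pow_div_add_one (1 : ℚ) n
  simp only [one_pow, mul_one, sum_range_succ, Nat.choose_self, Nat.cast_one] at integral
  rw [eq_sub_of_add_eq integral]
  ring

theorem sum_neg_one_pow_mul_choose_succ_div_add_one (n : ℕ) :
    ∑ j ∈ range n, (-1 : ℚ) ^ j * n.choose (j + 1) / (j + 1) = harmonic n := by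
  induction n with
  | zero => simp
  | succ n ih =>
    have pascal (j : ℕ) : (-1 : ℚ) ^ j * (n + 1).choose (j + 1) / (j + 1) =
        (-1) ^ j * n.choose j / (j + 1) + (-1) ^ j * n.choose (j + 1) / (j + 1) := by
      rw [Nat.choose_succ_succ]
      push_cast
      ring
    simp only [pascal, sum_add_distrib, sum_neg_one_pow_mul_choose_div_add_one]
    rw [sum_range_succ, ih, harmonic_succ, Nat.choose_succ_self]
    push_cast
    ring

theorem sum_neg_one_pow_div_add_one (n : ℕ) :
    ∑ j ∈ range (2 * n), (-1 : ℚ) ^ j / (j + 1) = harmonic (2 * n) - harmonic n := by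
  induction n with
  | zero => simp
  | succ n ih =>
    rw [Nat.mul_succ, sum_range_succ, sum_range_succ, ih]
    simp only [harmonic_succ, pow_succ, pow_mul]
    push_cast
    field_simp
    ring

theorem sum_neg_one_pow_mul_choose_succ_mul {R : Type*} [CommRing R] (f : ℕ → R) (n : ℕ) :
    ∑ k ∈ range (n + 2), (-1) ^ k * ((n + 1).choose k : R) * f k =
      -∑ k ∈ range (n + 1), (-1) ^ k * (n.choose k : R) * (f (k + 1) - f k) := by
  have pascal := sum_choose_succ_mul (fun k _ ↦ (-1) ^ k * f k) n
  rw [← sum_add_distrib] at pascal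
  rw [← sum_neg_distrib]
  calc _ = ∑ k ∈ range (n + 2), ((n + 1).choose k : R) * ((-1) ^ k * f k) :=
        sum_congr rfl fun k _ ↦ by ring
    _ = _ := pascal.trans (sum_congr rfl fun k _ ↦ by ring)

theorem H2_succ_sub (n : ℕ) : H2 (n + 1) - H2 n = 1 / ((n : ℚ) + 1) ^ 2 := by
  rw [H2, H2, sum_Icc_succ_top n.succ_pos, add_sub_cancel_left, Nat.cast_succ]

theorem mul_sum_neg_one_pow_mul_choose_mul_H2 (n : ℕ) :
    n * ∑ k ∈ range (n + 1), (-1 : ℚ) ^ k * n.choose k * H2 k = -harmonic n := by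
  cases n with
  | zero => simp
  | succ n =>
    rw [sum_neg_one_pow_mul_choose_succ_mul, mul_neg,
      ← sum_neg_one_pow_mul_choose_succ_div_add_one, mul_sum]
    congr 1
    refine sum_congr rfl fun k _ ↦ ?_
    have hn : (n : ℚ) + 1 ≠ 0 := n.cast_add_one_ne_zero
    calc ((n + 1 : ℕ) : ℚ) * ((-1) ^ k * n.choose k * (H2 (k + 1) - H2 k))
        = (-1) ^ k * (n + 1) * (n.choose k / (k + 1)) / (k + 1) := by
          rw [H2_succ_sub]
          push_cast
          field_simp
      _ = (-1) ^ k * (n + 1).choose (k + 1) / (k + 1) := by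
          rw [choose_div_add_one]
          field_simp

end BinomialIdentities

section BinomialCoefficientsModPrime

variable {p : ℕ} [hp : Fact p.Prime]

theorem choose_pred_eq_neg_one_pow {j : ℕ} (hj : j < p) :
    ((p - 1).choose j : ZMod p) = (-1) ^ j := by
  induction j with
  | zero => simp
  | succ j ih =>
    have pascal : (p - 1).choose j + (p - 1).choose (j + 1) = p.choose (j + 1) := by
      rw [← Nat.choose_succ_succ, Nat.succ_eq_add_one, Nat.sub_add_cancel hp.out.one_le]
    have vanishing : (p.choose (j + 1) : ZMod p) = 0 :=
      (ZMod.natCast_eq_zero_iff _ _).2 (hp.out.dvd_choose_self j.succ_ne_zero hj)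
    rw [← pascal, Nat.cast_add, ih (by lia)] at vanishing
    rw [pow_succ, mul_neg_one]
    exact eq_neg_of_add_eq_zero_right vanishing

theorem centralBinom_eq_neg_four_pow_mul_choose {n k : ℕ} (hn : p = 2 * n + 1) (hk : k < p) :
    (k.centralBinom : ZMod p) = (-4) ^ k * n.choose k := by
  induction k with
  | zero => simp
  | succ k ih =>
    have hk0 : (k : ZMod p) + 1 ≠ 0 := by
      exact_mod_cast mt (ZMod.natCast_eq_zero_iff _ _).1 (Nat.not_dvd_of_pos_of_lt k.succ_pos hk)
    have hn0 : (2 * n + 1 : ZMod p) = 0 := by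
      exact_mod_cast (congrArg (Nat.cast (R := ZMod p)) hn).symm.trans (ZMod.natCast_self p)
    have central_rec : ((k : ZMod p) + 1) * (k + 1).centralBinom =
        2 * (2 * k + 1) * k.centralBinom := by
      exact_mod_cast congrArg (Nat.cast (R := ZMod p)) k.succ_mul_centralBinom_succ
    refine mul_left_cancel₀ hk0 ?_
    rw [central_rec, ih (by lia), pow_succ]
    linear_combination 2 * (-4) ^ k * n.choose k * hn0 + 
      4 * (-4) ^ k * add_one_mul_cast_choose_succ (R := ZMod p) n k

end BinomialCoefficientsModPrime

section PIntegral

variable {p : ℕ} [hp : Fact p.Prime]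

theorem padicValuation_lt_one_iff_dvd_num {x : ℚ} :
    Rat.padicValuation p x < 1 ↔ (p : ℤ) ∣ x.num := by
  have val_num : Rat.padicValuation p x * Int.padicValuation p x.den =
      Int.padicValuation p x.num := by
    rw [← Rat.padicValuation_cast, ← Rat.padicValuation_cast, ← map_mul, Int.cast_natCast,
      Rat.mul_den_eq_num]
  rw [← Int.padicValuation_lt_one_iff, ← val_num]
  refine ⟨fun h ↦ mul_lt_one_of_lt_of_le h (Int.padicValuation_le_one p _), fun h ↦ ?_⟩
  have hden : Int.padicValuation p x.den = 1 := by
    rw [Int.padicValuation_eq_one_iff, Int.natCast_dvd_natCast]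
    intro hdvd
    rw [val_num, Int.padicValuation_lt_one_iff, Int.natCast_dvd] at h
    exact hp.out.one_lt.ne' (Nat.eq_one_of_dvd_coprimes x.reduced h hdvd)
  rwa [hden, mul_one] at h

theorem inv_natCast_mem_integer {k : ℕ} (hk : ¬p ∣ k) :
    (k : ℚ)⁻¹ ∈ (Rat.padicValuation p).integer := by
  have hk1 : Int.padicValuation p k = 1 := by
    rwa [Int.padicValuation_eq_one_iff, Int.natCast_dvd_natCast]
  rw [Valuation.mem_integer_iff, map_inv₀, ← Int.cast_natCast, Rat.padicValuation_cast, hk1,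
    inv_one]

theorem inv_add_one_mem_integer {j : ℕ} (hj : j + 1 < p) :
    ((j : ℚ) + 1)⁻¹ ∈ (Rat.padicValuation p).integer := by
  exact_mod_cast inv_natCast_mem_integer (Nat.not_dvd_of_pos_of_lt j.succ_pos hj)

theorem H2_mem_integer {n : ℕ} (hn : n < p) : H2 n ∈ (Rat.padicValuation p).integer := by
  refine sum_mem fun k hk ↦ ?_
  rw [mem_Icc] at hk
  rw [one_div, ← inv_pow]
  exact pow_mem (inv_natCast_mem_integer (Nat.not_dvd_of_pos_of_lt hk.1 (by lia))) 2

end PIntegral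

namespace ratModEq

@[refl]
theorem refl (m : ℕ) (a : ℚ) : ratModEq m a a := by
  simp [ratModEq]

@[symm]
theorem symm {m : ℕ} {a b : ℚ} (h : ratModEq m a b) : ratModEq m b a := by
  rwa [ratModEq, ← neg_sub, Rat.num_neg_eq_neg_num, dvd_neg]

theorem of_zmod_eq {m : ℕ} {a b : ℤ} (h : (a : ZMod m) = b) : ratModEq m a b := by
  rw [ratModEq, ← Int.cast_sub, Rat.num_intCast]
  exact (ZMod.intCast_eq_intCast_iff_dvd_sub b a m).1 h.symm

variable {p : ℕ} [Fact p.Prime] {a b c d : ℚ}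

theorem iff_padicValuation_sub_lt_one : ratModEq p a b ↔ Rat.padicValuation p (a - b) < 1 :=
  padicValuation_lt_one_iff_dvd_num.symm

@[trans]
theorem trans (hab : ratModEq p a b) (hbc : ratModEq p b c) : ratModEq p a c := by
  rw [iff_padicValuation_sub_lt_one] at hab hbc ⊢
  rw [← sub_add_sub_cancel a b c]
  exact Valuation.map_add_lt _ hab hbc

instance : Trans (ratModEq p) (ratModEq p) (ratModEq p) := ⟨trans⟩

theorem sub (hab : ratModEq p a b) (hcd : ratModEq p c d) : ratModEq p (a - c) (b - d) := by
  rw [iff_padicValuation_sub_lt_one] at hab hcd ⊢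
  rw [sub_sub_sub_comm]
  exact Valuation.map_sub_lt _ hab hcd

theorem sum {ι : Type*} {s : Finset ι} {f g : ι → ℚ} (h : ∀ i ∈ s, ratModEq p (f i) (g i)) :
    ratModEq p (∑ i ∈ s, f i) (∑ i ∈ s, g i) := by
  simp only [iff_padicValuation_sub_lt_one, ← sum_sub_distrib] at h ⊢
  exact Valuation.map_sum_lt _ one_ne_zero h

theorem mul_right (hab : ratModEq p a b) (hc : c ∈ (Rat.padicValuation p).integer) :
    ratModEq p (a * c) (b * c) := by
  rw [iff_padicValuation_sub_lt_one] at hab ⊢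
  rw [← sub_mul, map_mul]
  exact mul_lt_one_of_lt_of_le hab hc

theorem self_mul_zero (ha : a ∈ (Rat.padicValuation p).integer) : ratModEq p (p * a) 0 := by
  have hp0 : ratModEq p ((p : ℤ) : ℚ) ((0 : ℤ) : ℚ) := of_zmod_eq (by simp)
  simpa using hp0.mul_right ha

end ratModEq

section HarmonicModPrime

variable {p : ℕ} [hp : Fact p.Prime]

theorem choose_pred_div_ratModEq {j k : ℕ} (hj : j < p) (hk : k + 1 < p) :
    ratModEq p ((p - 1).choose j / (k + 1)) ((-1) ^ j / (k + 1)) := by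
  have h : ratModEq p (((p - 1).choose j : ℤ) : ℚ) (((-1) ^ j : ℤ) : ℚ) :=
    .of_zmod_eq (by simpa using choose_pred_eq_neg_one_pow hj)
  simpa [div_eq_mul_inv] using h.mul_right (inv_add_one_mem_integer hk)

theorem harmonic_pred_ratModEq_neg :
    ratModEq p (harmonic (p - 1)) (-harmonic (p - 1)) := by
  calc harmonic (p - 1)
      = ∑ j ∈ range (p - 1), (p - 1).choose (j + 1) / ((j : ℚ) + 1) * (-1) ^ j := by
        rw [← sum_neg_one_pow_mul_choose_succ_div_add_one]
        exact sum_congr rfl fun j _ ↦ by ring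
    ratModEq p _ (∑ j ∈ range (p - 1), (-1) ^ (j + 1) / ((j : ℚ) + 1) * (-1) ^ j) := by
        refine .sum fun j hj ↦ ?_
        rw [mem_range] at hj
        exact (choose_pred_div_ratModEq (by lia) (by lia)).mul_right
          (pow_mem (neg_mem (one_mem _)) j)
    _ = -harmonic (p - 1) := by
        rw [harmonic, ← sum_neg_distrib]
        refine sum_congr rfl fun j _ ↦ ?_
        have sign : (-1 : ℚ) ^ j * (-1) ^ j = 1 := by rw [← mul_pow]; simp
        push_cast
        linear_combination -((j : ℚ) + 1)⁻¹ * sign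

theorem harmonic_pred_ratModEq_zero (hp2 : p ≠ 2) : ratModEq p (harmonic (p - 1)) 0 := by
  have half_mem : (2 : ℚ)⁻¹ ∈ (Rat.padicValuation p).integer := by
    exact_mod_cast inv_natCast_mem_integer
      (mt (Nat.prime_dvd_prime_iff_eq hp.out Nat.prime_two).1 hp2)
  have twice := harmonic_pred_ratModEq_neg.sub (.refl p (-harmonic (p - 1)))
  convert twice.mul_right half_mem using 1 <;> ring

theorem harmonic_ratModEq_neg_two_mul_fermatQuotient {n : ℕ} (hn : p = 2 * n + 1) :
    ratModEq p (harmonic n) (-2 * ((2 ^ (p - 1) - 1) / p)) := by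
  have hpred : p - 1 = 2 * n := by lia
  have hcast : ((p - 1 : ℕ) : ℚ) + 1 = p := by exact_mod_cast Nat.sub_add_cancel hp.out.one_le
  calc harmonic n
      = harmonic (p - 1) - ∑ j ∈ range (p - 1), (-1 : ℚ) ^ j / (j + 1) := by
        rw [hpred, sum_neg_one_pow_div_add_one, sub_sub_cancel]
    ratModEq p _ (0 - ∑ j ∈ range (p - 1), ((p - 1).choose j : ℚ) / (j + 1)) := by
        refine (harmonic_pred_ratModEq_zero (by lia)).sub (.sum fun j hj ↦ ?_)
        rw [mem_range] at hj
        exact (choose_pred_div_ratModEq (by lia) (by lia)).symm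
    _ = -2 * ((2 ^ (p - 1) - 1) / p) := by
        rw [sum_choose_div_add_one_eq_two_mul, hcast, zero_sub, neg_mul]

theorem centralBinom_div_four_pow_ratModEq_s5 {n k : ℕ} (hn : p = 2 * n + 1) (hk : k < p) :
    ratModEq p (k.centralBinom / 4 ^ k) ((-1) ^ k * n.choose k) := by
  have hcentral : ratModEq p ((k.centralBinom : ℤ) : ℚ) (((-4) ^ k * n.choose k : ℤ) : ℚ) :=
    .of_zmod_eq (by simpa using centralBinom_eq_neg_four_pow_mul_choose hn hk)
  have hquarter : ((4 : ℚ) ^ k)⁻¹ ∈ (Rat.padicValuation p).integer := by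
    have hp4 : ¬p ∣ 4 ^ k := fun h ↦ by
      have := (Nat.prime_dvd_prime_iff_eq hp.out Nat.prime_two).1
        (hp.out.dvd_of_dvd_pow (n := 2) (hp.out.dvd_of_dvd_pow h))
      lia
    exact_mod_cast inv_natCast_mem_integer hp4
  convert hcentral.mul_right hquarter using 1
  · rw [Int.cast_natCast, div_eq_mul_inv]
  · push_cast
    rw [neg_pow (4 : ℚ)]
    field_simp

theorem sum_centralBinom_div_four_pow_mul_ratModEq {n : ℕ} (hn : p = 2 * n + 1) {f : ℕ → ℚ}
    (hf : ∀ k ≤ n, f k ∈ (Rat.padicValuation p).integer) :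
    ratModEq p (∑ k ∈ range (n + 1), k.centralBinom / 4 ^ k * f k)
      (∑ k ∈ range (n + 1), (-1) ^ k * n.choose k * f k) := by
  refine .sum fun k hk ↦ ?_
  rw [mem_range, Nat.lt_succ_iff] at hk
  exact (centralBinom_div_four_pow_ratModEq_s5 hn (by lia)).mul_right (hf k hk)

theorem sum_neg_one_pow_mul_choose_mul_H2_ratModEq {n : ℕ} (hn : p = 2 * n + 1) :
    ratModEq p (∑ k ∈ range (n + 1), (-1) ^ k * n.choose k * H2 k) (harmonic n * 2) := by
  set T : ℚ := ∑ k ∈ range (n + 1), (-1) ^ k * n.choose k * H2 k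
  have hT : T ∈ (Rat.padicValuation p).integer := by
    refine sum_mem fun k hk ↦ ?_
    rw [mem_range] at hk
    exact mul_mem (mul_mem (pow_mem (neg_mem (one_mem _)) k) (natCast_mem _ _))
      (H2_mem_integer (by lia))
  calc T = T - 0 := (sub_zero T).symm
    ratModEq p _ (T - p * T) := .sub (.refl p T) (ratModEq.self_mul_zero hT).symm
    _ = -2 * (n * T) := by
        rw [hn]
        push_cast
        ring
    _ = harmonic n * 2 := by
        rw [mul_sum_neg_one_pow_mul_choose_mul_H2]
        ring

end HarmonicModPrime

theorem stmt5 (p : ℕ) (hp : p.Prime) (hodd : Odd p) :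
    ratModEq p
      (∑ k ∈ Finset.range ((p - 1) / 2 + 1), ((2 * k).choose k : ℚ) / 4 ^ k * H2 k)
      (-4 * (((2 : ℚ) ^ (p - 1) - 1) / p)) := by
  have : Fact p.Prime := ⟨hp⟩
  obtain ⟨n, hn⟩ := hodd
  have hH2 : ∀ k ≤ n, H2 k ∈ (Rat.padicValuation p).integer := fun k hk ↦
    H2_mem_integer (by lia)
  have htwo : (2 : ℚ) ∈ (Rat.padicValuation p).integer := ofNat_mem _ 2
  rw [show (p - 1) / 2 = n by lia]
  calc ratModEq p
        (∑ k ∈ range (n + 1), ((2 * k).choose k : ℚ) / 4 ^ k * H2 k)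
        (∑ k ∈ range (n + 1), (-1) ^ k * n.choose k * H2 k) :=
        sum_centralBinom_div_four_pow_mul_ratModEq hn hH2
    ratModEq p _ (harmonic n * 2) := sum_neg_one_pow_mul_choose_mul_H2_ratModEq hn
    ratModEq p _ (-2 * ((2 ^ (p - 1) - 1) / p) * 2) :=
      (harmonic_ratModEq_neg_two_mul_fermatQuotient hn).mul_right htwo
    _ = -4 * ((2 ^ (p - 1) - 1) / p) := by ring
end

section
/- Let p be an odd prime. Then ∑_{k=1}^{(p-1)/2} (C(2k,k)/(k·4^k)) · H_k^{(2)} ≡ B_{p-3}/2 (mod p), where B_0, B_1, B_2, ... are the Bernoulli numbers. -/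
/-!
In characteristic `p = 2n + 1` one has `C(2k,k) = (-4)^k C(n,k)`, so the sum reduces modulo `p` to
the binomial transform of `H_k^{(2)} / k`, which telescopes to `-∑_{j ≤ n} H_j / j²`. To evaluate
this half-range sum, consider the full-range sum `∑_{j < p} H_{j-1} / j²`. Writing inverses as
powers, Faulhaber's formula expands it in power sums `∑_{j < p} j^e`, of which a single one
survives, giving `B_{p-3}`. On the other hand, the reflection `H_{p-1-j} = H_j` folds it into
`2 ∑_{j ≤ n} H_j / j² - H_n^{(3)}`, and Faulhaber's polynomial at `n + 1 = 1/2` gives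
`H_n^{(3)} = -2 B_{p-3}`.
-/

open Finset
open scoped Nat

section Reduction

variable {K : Type*} [Field K] {x y : ℚ} {z w : K}

/-- `ReducesTo x z` says that the rational number `x` reduces to `z` in the field `K`: its
denominator is invertible in `K` and its image is `z`. For `K = ZMod p` this is reduction modulo `p`
of a `p`-integral rational. The condition on the denominator is needed since the cast `ℚ → K`
takes junk values elsewhere. -/
structure ReducesTo (x : ℚ) (z : K) : Prop where
  den_ne_zero : (x.den : K) ≠ 0
  cast_eq : (x : K) = z

namespace ReducesTo

theorem unique (hz : ReducesTo x z) (hw : ReducesTo x w) : z = w :=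
  hz.cast_eq.symm.trans hw.cast_eq

theorem natCast (n : ℕ) : ReducesTo (n : ℚ) (n : K) := ⟨by simp, by simp⟩

theorem add (hx : ReducesTo x z) (hy : ReducesTo y w) : ReducesTo (x + y) (z + w) where
  den_ne_zero := ne_zero_of_dvd_ne_zero
    (by simpa using ⟨hx.den_ne_zero, hy.den_ne_zero⟩) (Nat.cast_dvd_cast (Rat.add_den_dvd x y))
  cast_eq := by
    rw [Rat.cast_add_of_ne_zero hx.den_ne_zero hy.den_ne_zero, hx.cast_eq, hy.cast_eq]

theorem mul (hx : ReducesTo x z) (hy : ReducesTo y w) : ReducesTo (x * y) (z * w) where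
  den_ne_zero := ne_zero_of_dvd_ne_zero
    (by simpa using ⟨hx.den_ne_zero, hy.den_ne_zero⟩) (Nat.cast_dvd_cast (Rat.mul_den_dvd x y))
  cast_eq := by
    rw [Rat.cast_mul_of_ne_zero hx.den_ne_zero hy.den_ne_zero, hx.cast_eq, hy.cast_eq]

theorem neg (hx : ReducesTo x z) : ReducesTo (-x) (-z) :=
  ⟨by simpa using hx.den_ne_zero, by simp [hx.cast_eq]⟩

theorem sub (hx : ReducesTo x z) (hy : ReducesTo y w) : ReducesTo (x - y) (z - w) := by
  simpa only [sub_eq_add_neg] using hx.add hy.neg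

theorem num_eq_zero_iff (hx : ReducesTo x z) : (x.num : K) = 0 ↔ z = 0 := by
  rw [← hx.cast_eq, Rat.cast_def, div_eq_zero_iff, or_iff_left hx.den_ne_zero]

theorem inv (hx : ReducesTo x z) (hz : z ≠ 0) : ReducesTo x⁻¹ z⁻¹ := by
  have hnum : (x.num : K) ≠ 0 := hx.num_eq_zero_iff.not.mpr hz
  have hx0 : x ≠ 0 := by
    rintro rfl
    simp at hnum
  refine ⟨?_, by rw [Rat.cast_inv_of_ne_zero hnum, hx.cast_eq]⟩
  rw [Rat.den_inv_of_ne_zero hx0]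
  have hdvd := Int.cast_dvd_cast (α := K) _ _ (Int.natAbs_dvd.mpr (dvd_refl x.num))
  exact ne_zero_of_dvd_ne_zero hnum (by rwa [Int.cast_natCast] at hdvd)

theorem div (hx : ReducesTo x z) (hy : ReducesTo y w) (hw : w ≠ 0) :
    ReducesTo (x / y) (z / w) := by
  simpa only [div_eq_mul_inv] using hx.mul (hy.inv hw)

theorem pow (hx : ReducesTo x z) (n : ℕ) : ReducesTo (x ^ n) (z ^ n) := by
  induction n with
  | zero => simpa using natCast (K := K) 1
  | succ n ih => simpa only [pow_succ] using ih.mul hx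

theorem sum {ι : Type*} {s : Finset ι} {f : ι → ℚ} {g : ι → K}
    (h : ∀ i ∈ s, ReducesTo (f i) (g i)) : ReducesTo (∑ i ∈ s, f i) (∑ i ∈ s, g i) := by
  classical
  induction s using Finset.induction_on with
  | empty => simpa using natCast (K := K) 0
  | insert a s ha ih =>
    simpa only [sum_insert ha] using
      (h a (mem_insert_self a s)).add (ih fun i hi ↦ h i (mem_insert_of_mem hi))

theorem ratModEq {p : ℕ} [Fact p.Prime] {z : ZMod p} (hx : ReducesTo x z) (hy : ReducesTo y z) :
    ratModEq p x y :=
  (ZMod.intCast_zmod_eq_zero_iff_dvd _ p).mp ((hx.sub hy).num_eq_zero_iff.mpr (sub_self z))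

end ReducesTo

end Reduction

section Faulhaber

variable {K : Type*} [Field K]

theorem natCast_ne_zero_of_isUnit_factorial {n k : ℕ} (hn : IsUnit (n ! : K)) (hk : 0 < k)
    (hkn : k ≤ n) : (k : K) ≠ 0 :=
  ne_zero_of_dvd_ne_zero hn.ne_zero (Nat.cast_dvd_cast (Nat.dvd_factorial hk hkn))

theorem reducesTo_bernoulli' {n : ℕ} (hn : IsUnit ((n + 1)! : K)) :
    ReducesTo (bernoulli' n) (bernoulli' n : K) := by
  induction n using Nat.strong_induction_on with
  | _ n ih =>
    have hterm : ∀ k ∈ range n, ReducesTo ((n.choose k : ℚ) / (n - k + 1) * bernoulli' k)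
        ((n.choose k : K) / (n - k + 1) * bernoulli' k) := by
      intro k hk
      have hkn : k < n := mem_range.mp hk
      have hcast : ((n - k + 1 : ℕ) : K) ≠ 0 :=
        natCast_ne_zero_of_isUnit_factorial hn (by lia) (by lia)
      have hcoeff := (ReducesTo.natCast (K := K) (n.choose k)).div (.natCast (n - k + 1)) hcast
      push_cast [hkn.le] at hcoeff
      exact hcoeff.mul (ih k hkn (hn.natCast_factorial_of_le (by lia)))
    have hrec := (ReducesTo.natCast (K := K) 1).sub (.sum hterm)
    rw [Nat.cast_one, ← bernoulli'_def] at hrec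
    exact ⟨hrec.den_ne_zero, rfl⟩

theorem reducesTo_bernoulli {n : ℕ} (hn : IsUnit ((n + 1)! : K)) :
    ReducesTo (bernoulli n) (bernoulli n : K) :=
  have hprod := ((ReducesTo.natCast (K := K) 1).neg.pow n).mul (reducesTo_bernoulli' hn)
  ⟨by simpa [bernoulli] using hprod.den_ne_zero, rfl⟩

/-- Faulhaber's polynomial `(B_{m+1}(x) - B_{m+1}) / (m + 1)`, which interpolates the power sums
`∑_{k < N} k ^ m`, evaluated in an arbitrary field. -/
noncomputable def faulhaber (m : ℕ) (x : K) : K :=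
  ∑ i ∈ range (m + 1), (bernoulli i : K) * (m + 1).choose i * x ^ (m + 1 - i) / (m + 1)

theorem ReducesTo.faulhaber {m : ℕ} (hm : IsUnit ((m + 1)! : K)) {x : ℚ} {z : K}
    (hx : ReducesTo x z) : ReducesTo (faulhaber m x) (faulhaber m z) := by
  refine .sum fun i hi ↦ ?_
  have hi : i < m + 1 := mem_range.mp hi
  have hm0 : ((m + 1 : ℕ) : K) ≠ 0 :=
    natCast_ne_zero_of_isUnit_factorial hm m.succ_pos le_rfl
  have hterm := (((reducesTo_bernoulli (hm.natCast_factorial_of_le hi)).mul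
    (.natCast ((m + 1).choose i))).mul (hx.pow (m + 1 - i))).div (.natCast (m + 1)) hm0
  simpa using hterm

theorem faulhaber_natCast {m : ℕ} (hm : IsUnit ((m + 1)! : K)) (N : ℕ) :
    faulhaber m (N : K) = ∑ k ∈ range N, (k : K) ^ m := by
  have hsum : faulhaber m (N : ℚ) = ∑ k ∈ range N, (k : ℚ) ^ m := by
    simp only [faulhaber, Rat.cast_id, sum_range_pow]
  refine ((ReducesTo.natCast N).faulhaber hm).unique ?_
  rw [hsum]
  exact .sum fun k _ ↦ (ReducesTo.natCast k).pow m

theorem polynomial_bernoulli_eval_one_half (n : ℕ) :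
    (Polynomial.bernoulli n).eval (1 / 2 : ℚ) = (2 / 2 ^ n - 1) * bernoulli n := by
  have h := bernoulliFun_eval_half n
  rw [bernoulliFun, show (2⁻¹ : ℝ) = algebraMap ℚ ℝ (1 / 2) by simp, Polynomial.eval_map_algebraMap,
    Polynomial.aeval_algebraMap_apply_eq_algebraMap_eval, eq_ratCast] at h
  apply Rat.cast_injective (α := ℝ)
  push_cast
  exact h

theorem faulhaber_one_half_rat (m : ℕ) :
    faulhaber m (1 / 2 : ℚ) = (2 / 2 ^ (m + 1) - 2) * bernoulli (m + 1) / (m + 1) := by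
  have h := polynomial_bernoulli_eval_one_half (m + 1)
  rw [Polynomial.bernoulli, Polynomial.eval_finsetSum, sum_range_succ] at h
  simp only [Polynomial.eval_monomial, Nat.choose_self, Nat.cast_one, Nat.sub_self, pow_zero,
    mul_one] at h
  rw [faulhaber, ← sum_div]
  congr 1
  simp only [Rat.cast_id]
  linear_combination h

theorem faulhaber_one_half {m : ℕ} (hm : IsUnit ((m + 2)! : K)) :
    faulhaber m (1 / 2 : K) = (2 / 2 ^ (m + 1) - 2) * bernoulli (m + 1) / (m + 1) := by
  have h2 : ((2 : ℕ) : K) ≠ 0 := natCast_ne_zero_of_isUnit_factorial hm two_pos (by lia)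
  have hm0 : ((m + 1 : ℕ) : K) ≠ 0 :=
    natCast_ne_zero_of_isUnit_factorial hm m.succ_pos (by lia)
  have hhalf : ReducesTo (1 / 2 : ℚ) (1 / 2 : K) := by
    simpa using (ReducesTo.natCast 1).div (.natCast 2) h2
  have htwo : ReducesTo (2 : ℚ) (2 : K) := by simpa using ReducesTo.natCast (K := K) 2
  refine (hhalf.faulhaber (hm.natCast_factorial_of_le (by lia))).unique ?_
  rw [faulhaber_one_half_rat]
  push_cast at h2
  have hvalue := (((htwo.div (htwo.pow (m + 1)) (pow_ne_zero _ h2)).sub htwo).mul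
    (reducesTo_bernoulli hm)).div (.natCast (m + 1)) hm0
  simpa using hvalue

end Faulhaber

section BinomialTransform

variable {K : Type*} [Field K]

/-- The generalized harmonic number `H_n^{(s)} = ∑_{k=1}^n 1/k^s` in a field. -/
def genHarmonic (K : Type*) [Field K] (s n : ℕ) : K := ∑ k ∈ Icc 1 n, 1 / (k : K) ^ s

theorem genHarmonic_zero (s : ℕ) : genHarmonic K s 0 = 0 := by simp [genHarmonic]

theorem genHarmonic_succ (s n : ℕ) :
    genHarmonic K s (n + 1) = genHarmonic K s n + 1 / ((n + 1 : ℕ) : K) ^ s :=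
  sum_Icc_succ_top (by lia) _

theorem reducesTo_H2 {n : ℕ} (hn : IsUnit (n ! : K)) :
    ReducesTo (H2 n) (genHarmonic K 2 n) := by
  refine .sum fun k hk ↦ ?_
  obtain ⟨hk1, hkn⟩ := mem_Icc.mp hk
  have hk0 := natCast_ne_zero_of_isUnit_factorial hn hk1 hkn
  simpa using (ReducesTo.natCast 1).div ((ReducesTo.natCast k).pow 2) (pow_ne_zero 2 hk0)

/-- The alternating binomial transform `n ↦ ∑_k (-1)^k C(n,k) a_k` of a sequence `a`. -/
def binomialTransform (a : ℕ → K) (n : ℕ) : K :=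
  ∑ k ∈ range (n + 1), (-1) ^ k * (n.choose k : K) * a k

theorem binomialTransform_zero (a : ℕ → K) : binomialTransform a 0 = a 0 := by
  simp [binomialTransform]

theorem binomialTransform_sub (a b : ℕ → K) (n : ℕ) :
    binomialTransform (fun k ↦ a k - b k) n = binomialTransform a n - binomialTransform b n := by
  simp only [binomialTransform, mul_sub, sum_sub_distrib]

theorem binomialTransform_succ (a : ℕ → K) (n : ℕ) :
    binomialTransform a (n + 1) = -binomialTransform (fun k ↦ a (k + 1) - a k) n := by
  have hsplit : binomialTransform a n =
      ∑ k ∈ range (n + 1), (-1) ^ (k + 1) * (n.choose (k + 1) : K) * a (k + 1) + a 0 := by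
    have h := sum_range_succ' (fun k ↦ (-1) ^ k * (n.choose k : K) * a k) (n + 1)
    simpa [binomialTransform, sum_range_succ _ (n + 1)] using h
  rw [binomialTransform_sub, neg_sub, hsplit, binomialTransform, binomialTransform,
    sum_range_succ' _ (n + 1), add_sub_right_comm, ← sum_sub_distrib]
  congr 1
  · refine sum_congr rfl fun k _ ↦ ?_
    rw [Nat.choose_succ_succ]
    push_cast
    ring
  · simp

theorem binomialTransform_const_succ (c : K) (n : ℕ) :
    binomialTransform (fun _ ↦ c) (n + 1) = 0 := by
  rw [binomialTransform_succ]
  simp [binomialTransform]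

theorem binomialTransform_shift_div (b : ℕ → K) {n : ℕ} (hn : IsUnit ((n + 1)! : K)) :
    binomialTransform (fun k ↦ b (k + 1) / ((k + 1 : ℕ) : K)) n =
      (b 0 - binomialTransform b (n + 1)) / ((n + 1 : ℕ) : K) := by
  have hn0 := natCast_ne_zero_of_isUnit_factorial hn n.succ_pos le_rfl
  rw [eq_div_iff hn0, binomialTransform, binomialTransform, sum_range_succ' _ (n + 1), sum_mul]
  simp only [pow_zero, Nat.choose_zero_right, Nat.cast_one, one_mul]
  rw [sub_add_cancel_right, ← sum_neg_distrib]
  refine sum_congr rfl fun k hk ↦ ?_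
  have hk0 : ((k + 1 : ℕ) : K) ≠ 0 :=
    natCast_ne_zero_of_isUnit_factorial hn k.succ_pos (by simpa using hk)
  have habsorb : ((n + 1 : ℕ) : K) * n.choose k = (n + 1).choose (k + 1) * ((k + 1 : ℕ) : K) := by
    exact_mod_cast congrArg (Nat.cast (R := K)) (Nat.add_one_mul_choose_eq n k)
  field_simp
  linear_combination ((-1) ^ k * b (k + 1)) * habsorb

theorem binomialTransform_div (b : ℕ → K) {n : ℕ} (hn : IsUnit (n ! : K)) :
    binomialTransform (fun k ↦ b k / (k : K)) n =
      ∑ j ∈ Icc 1 n, (binomialTransform b j - b 0) / (j : K) := by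
  induction n with
  | zero => simp [binomialTransform_zero]
  | succ n ih =>
    rw [sum_Icc_succ_top (by lia), ← ih (hn.natCast_factorial_of_le n.le_succ),
      binomialTransform_succ, binomialTransform_sub, binomialTransform_shift_div b hn]
    ring

theorem binomialTransform_one_div {n : ℕ} (hn : IsUnit (n ! : K)) :
    binomialTransform (fun k ↦ 1 / (k : K)) n = -genHarmonic K 1 n := by
  rw [binomialTransform_div (fun _ ↦ 1) hn, genHarmonic, ← sum_neg_distrib]
  refine sum_congr rfl fun j hj ↦ ?_
  obtain ⟨i, rfl⟩ := Nat.exists_eq_succ_of_ne_zero (by grind : j ≠ 0)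
  rw [binomialTransform_const_succ, zero_sub, neg_div, pow_one]

theorem binomialTransform_genHarmonic_two {n : ℕ} (hn : IsUnit (n ! : K)) :
    binomialTransform (genHarmonic K 2) n = -(genHarmonic K 1 n / n) := by
  cases n with
  | zero => simp [binomialTransform_zero, genHarmonic_zero]
  | succ n =>
    have hdiff : (fun k ↦ genHarmonic K 2 (k + 1) - genHarmonic K 2 k) =
        fun k ↦ 1 / ((k + 1 : ℕ) : K) / ((k + 1 : ℕ) : K) := by
      funext k
      rw [genHarmonic_succ, add_sub_cancel_left, div_div, sq]
    rw [binomialTransform_succ, hdiff, binomialTransform_shift_div (fun k ↦ 1 / (k : K)) hn,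
      binomialTransform_one_div hn, Nat.cast_zero, div_zero, zero_sub, neg_neg]

theorem binomialTransform_genHarmonic_two_div {n : ℕ} (hn : IsUnit (n ! : K)) :
    binomialTransform (fun k ↦ genHarmonic K 2 k / (k : K)) n =
      -∑ j ∈ Icc 1 n, genHarmonic K 1 j / (j : K) ^ 2 := by
  rw [binomialTransform_div _ hn, ← sum_neg_distrib]
  refine sum_congr rfl fun j hj ↦ ?_
  rw [binomialTransform_genHarmonic_two (hn.natCast_factorial_of_le (mem_Icc.mp hj).2),
    genHarmonic_zero]
  ring

end BinomialTransform

section CentralBinomial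

variable {K : Type*} [Field K]

theorem add_one_mul_choose_add_one_cast (n k : ℕ) :
    ((k : K) + 1) * n.choose (k + 1) = (n - k) * n.choose k := by
  rcases le_or_gt k n with hkn | hkn
  · have h := congrArg (Nat.cast (R := K)) (Nat.choose_succ_right_eq n k)
    push_cast [hkn] at h
    linear_combination h
  · simp [Nat.choose_eq_zero_of_lt hkn, Nat.choose_eq_zero_of_lt (hkn.trans k.lt_succ_self)]

/-- In characteristic `2 * n + 1` we have `n = -1 / 2`, so this is `C(2k,k) = (-4)^k C(-1/2,k)`. -/
theorem centralBinom_cast_eq {n k : ℕ} (hn : (2 * n + 1 : K) = 0) (hk : IsUnit (k ! : K)) :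
    (k.centralBinom : K) = (-4) ^ k * n.choose k := by
  induction k with
  | zero => simp
  | succ k ih =>
    have hk0 : ((k + 1 : ℕ) : K) ≠ 0 :=
      natCast_ne_zero_of_isUnit_factorial hk k.succ_pos le_rfl
    have hcentral := congrArg (Nat.cast (R := K)) (Nat.succ_mul_centralBinom_succ k)
    push_cast at hk0 hcentral
    apply mul_left_cancel₀ hk0
    rw [hcentral, ih (hk.natCast_factorial_of_le k.le_succ)]
    linear_combination 4 * (-4) ^ k * add_one_mul_choose_add_one_cast (K := K) n k +
      2 * (-4) ^ k * (n.choose k : K) * hn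

theorem reducesTo_sum_centralBinom {n : ℕ} (hn : (2 * n + 1 : K) = 0) (hfac : IsUnit (n ! : K)) :
    ReducesTo (∑ k ∈ Icc 1 n, ((2 * k).choose k : ℚ) / (k * 4 ^ k) * H2 k)
      (binomialTransform (fun k ↦ genHarmonic K 2 k / (k : K)) n) := by
  have h2 : (2 : K) ≠ 0 := fun h ↦ by simp [h] at hn
  have h4 : ((4 : ℕ) : K) ≠ 0 := by
    rw [show ((4 : ℕ) : K) = 2 * 2 by norm_num]
    exact mul_ne_zero h2 h2
  have hrange : binomialTransform (fun k ↦ genHarmonic K 2 k / (k : K)) n =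
      ∑ k ∈ Icc 1 n, (-1) ^ k * (n.choose k : K) * (genHarmonic K 2 k / k) := by
    rw [binomialTransform, range_eq_Ico, sum_eq_sum_Ico_succ_bot n.succ_pos, genHarmonic_zero]
    simp [Ico_add_one_right_eq_Icc]
  rw [hrange]
  refine .sum fun k hk ↦ ?_
  obtain ⟨hk1, hkn⟩ := mem_Icc.mp hk
  have hk0 : (k : K) ≠ 0 := natCast_ne_zero_of_isUnit_factorial hfac hk1 hkn
  have hkfac := hfac.natCast_factorial_of_le hkn
  have hterm := ((ReducesTo.natCast (K := K) ((2 * k).choose k)).div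
    ((ReducesTo.natCast k).mul ((ReducesTo.natCast 4).pow k))
    (mul_ne_zero hk0 (pow_ne_zero k h4))).mul (reducesTo_H2 hkfac)
  have hreduced : ((2 * k).choose k : K) / (k * (4 : ℕ) ^ k) * genHarmonic K 2 k =
      (-1) ^ k * (n.choose k : K) * (genHarmonic K 2 k / k) := by
    rw [← Nat.centralBinom_eq_two_mul_choose, centralBinom_cast_eq hn hkfac, neg_pow]
    push_cast at h4 ⊢
    field_simp
  simpa only [← hreduced, Nat.cast_ofNat] using hterm

end CentralBinomial

section PrimeField

variable {p : ℕ} [Fact p.Prime]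

theorem isUnit_factorial_zmod {n : ℕ} (hn : n < p) : IsUnit (n ! : ZMod p) :=
  (IsUnit.natCast_factorial_iff_of_charP p).mpr hn

theorem two_ne_zero_zmod (hp : 2 < p) : (2 : ZMod p) ≠ 0 := by
  simpa using natCast_ne_zero_of_isUnit_factorial (isUnit_factorial_zmod hp) two_pos le_rfl

theorem two_mul_add_one_zmod {n : ℕ} (hn : p = 2 * n + 1) : (2 * n + 1 : ZMod p) = 0 := by
  have h := CharP.cast_eq_zero (ZMod p) p
  rw [congrArg Nat.cast hn] at h
  exact_mod_cast h

theorem sum_range_natCast_pow_zmod {e : ℕ} (he : e ≠ 0) :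
    ∑ j ∈ range p, (j : ZMod p) ^ e = if p - 1 ∣ e then -1 else 0 := by
  have hbij : ∑ j ∈ Ico 1 p, (j : ZMod p) ^ e = ∑ u : (ZMod p)ˣ, (u : ZMod p) ^ e :=
    sum_bij'
      (fun j hj ↦ Units.mk0 (j : ZMod p) (mt (ZMod.natCast_eq_zero_iff j p).mp
        (by grind [Nat.not_dvd_of_pos_of_lt])))
      (fun u _ ↦ (u : ZMod p).val)
      (fun _ _ ↦ mem_univ _)
      (by grind [Units.ne_zero, ZMod.val_ne_zero, ZMod.val_lt])
      (fun j hj ↦ by simp [ZMod.val_cast_of_lt (mem_Ico.mp hj).2])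
      (fun u _ ↦ Units.ext (ZMod.natCast_zmod_val _))
      (fun _ _ ↦ rfl)
  have hsplit := sum_eq_sum_Ico_succ_bot (Fact.out : p.Prime).pos fun j ↦ (j : ZMod p) ^ e
  rw [range_eq_Ico, hsplit, Nat.cast_zero, zero_pow he, zero_add, zero_add, hbij]
  simpa only [Units.val_pow_eq_pow_val, ZMod.card] using FiniteField.sum_pow_units (ZMod p) e

theorem one_div_pow_zmod (x : ZMod p) {s : ℕ} (hs : 0 < s) (hsp : s < p - 1) :
    1 / x ^ s = x ^ (p - 1 - s) := by
  rcases eq_or_ne x 0 with rfl | hx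
  · rw [zero_pow hs.ne', zero_pow (by lia), div_zero]
  · rw [div_eq_iff (pow_ne_zero s hx), ← pow_add, Nat.sub_add_cancel hsp.le,
      ZMod.pow_card_sub_one_eq_one hx]

theorem genHarmonic_eq_sum_range_pow {s : ℕ} (hs : 0 < s) (hsp : s < p - 1) (n : ℕ) :
    genHarmonic (ZMod p) s n = ∑ k ∈ range (n + 1), (k : ZMod p) ^ (p - 1 - s) := by
  rw [range_eq_Ico, sum_eq_sum_Ico_succ_bot (Nat.zero_lt_succ n), Nat.cast_zero, zero_pow (by lia),
    zero_add, zero_add, Nat.succ_eq_add_one, Ico_add_one_right_eq_Icc]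
  exact sum_congr rfl fun k _ ↦ one_div_pow_zmod _ hs hsp

theorem genHarmonic_one_reflect {j : ℕ} (hp : p ≠ 2) (hj : j < p) :
    genHarmonic (ZMod p) 1 (p - 1 - j) = genHarmonic (ZMod p) 1 j := by
  have hp3 : 3 ≤ p := (Fact.out : p.Prime).two_le.lt_of_ne' hp
  induction j with
  | zero =>
    rw [Nat.sub_zero, genHarmonic_zero, genHarmonic_eq_sum_range_pow one_pos (by lia),
      Nat.sub_add_cancel (by lia), sum_range_natCast_pow_zmod (by lia),
      if_neg (Nat.not_dvd_of_pos_of_lt (by lia) (by lia))]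
  | succ j ih =>
    have hstep := genHarmonic_succ (K := ZMod p) 1 (p - 1 - (j + 1))
    have hindex : p - 1 - (j + 1) + 1 = p - 1 - j := by lia
    have hneg : ((p - 1 - j : ℕ) : ZMod p) = -((j + 1 : ℕ) : ZMod p) := by
      rw [eq_neg_iff_add_eq_zero, ← Nat.cast_add, show p - 1 - j + (j + 1) = p by lia,
        ZMod.natCast_self]
    rw [hindex, ih (by lia), hneg] at hstep
    rw [genHarmonic_succ, hstep]
    ring

theorem sum_range_sum_range_pow_mul_pow {a b : ℕ} (ha : a + 1 < p) (hb : b + 1 < p)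
    (hab : p ≤ a + b + 2) :
    ∑ j ∈ range p, (∑ k ∈ range j, (k : ZMod p) ^ a) * (j : ZMod p) ^ b =
      -((bernoulli (a + b + 2 - p) : ZMod p) * (a + 1).choose (a + b + 2 - p) / (a + 1)) := by
  have hexpand : ∀ j, (∑ k ∈ range j, (k : ZMod p) ^ a) * (j : ZMod p) ^ b =
      ∑ i ∈ range (a + 1), (bernoulli i : ZMod p) * (a + 1).choose i / (a + 1) *
        (j : ZMod p) ^ (a + 1 - i + b) := by
    intro j
    rw [← faulhaber_natCast (isUnit_factorial_zmod ha), faulhaber, sum_mul]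
    refine sum_congr rfl fun i _ ↦ ?_
    ring
  simp only [hexpand]
  rw [sum_comm, sum_eq_single_of_mem (a + b + 2 - p) (by grind)]
  · rw [← mul_sum, sum_range_natCast_pow_zmod (by lia), if_pos (dvd_of_eq (by lia)), mul_neg_one]
  · intro i hi hne
    have hi : i < a + 1 := mem_range.mp hi
    have hndvd : ¬ p - 1 ∣ a + 1 - i + b := by
      rintro ⟨c, hc⟩
      obtain _ | _ | c := c
      · lia
      · lia
      · rw [mul_add_one, mul_add_one] at hc
        lia
    rw [← mul_sum, sum_range_natCast_pow_zmod (by lia), if_neg hndvd, mul_zero]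

theorem sum_Ico_genHarmonic_one_div_sq (hp : 3 < p) :
    ∑ j ∈ Ico 1 p, genHarmonic (ZMod p) 1 (j - 1) / (j : ZMod p) ^ 2 =
      (bernoulli (p - 3) : ZMod p) := by
  have hpow : ∑ j ∈ Ico 1 p, genHarmonic (ZMod p) 1 (j - 1) / (j : ZMod p) ^ 2 =
      ∑ j ∈ range p, (∑ k ∈ range j, (k : ZMod p) ^ (p - 2)) * (j : ZMod p) ^ (p - 3) := by
    have hsplit := sum_eq_sum_Ico_succ_bot (show 0 < p by lia) fun j ↦
      (∑ k ∈ range j, (k : ZMod p) ^ (p - 2)) * (j : ZMod p) ^ (p - 3)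
    rw [range_zero, sum_empty, zero_mul, zero_add, zero_add] at hsplit
    rw [range_eq_Ico, hsplit]
    refine sum_congr rfl fun j hj ↦ ?_
    rw [genHarmonic_eq_sum_range_pow one_pos (by lia), Nat.sub_add_cancel (mem_Ico.mp hj).1,
      div_eq_mul_one_div, one_div_pow_zmod _ two_pos (by lia)]
    rfl
  have hchoose : (((p - 1).choose (p - 3) : ℕ) : ZMod p) = 1 := by
    have hrec := add_one_mul_choose_add_one_cast (K := ZMod p) (p - 1) 1
    rw [Nat.choose_one_right] at hrec
    push_cast [show 1 ≤ p by lia] at hrec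
    rw [← Nat.choose_symm (by lia), show p - 1 - (p - 3) = 2 by lia]
    apply mul_left_cancel₀ (two_ne_zero_zmod (by lia))
    rw [CharP.cast_eq_zero (ZMod p) p] at hrec
    linear_combination hrec
  have hcast : ((p - 2 : ℕ) : ZMod p) + 1 = -1 := by
    push_cast [show 2 ≤ p by lia]
    rw [CharP.cast_eq_zero (ZMod p) p]
    ring
  rw [hpow, sum_range_sum_range_pow_mul_pow (by lia) (by lia) (by lia),
    show p - 2 + (p - 3) + 2 - p = p - 3 by lia, show p - 2 + 1 = p - 1 by lia, hchoose, hcast]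
  ring

theorem genHarmonic_half {s n : ℕ} (hn : p = 2 * n + 1) (hs : 1 < s) (hsp : s < p - 1) :
    genHarmonic (ZMod p) s n = (2 - 2 ^ s) * (bernoulli (p - s) : ZMod p) / s := by
  have h2 : (2 : ZMod p) ≠ 0 := two_ne_zero_zmod (by lia)
  have hhalf : ((n + 1 : ℕ) : ZMod p) = 1 / 2 := by
    rw [eq_div_iff h2]
    push_cast
    linear_combination two_mul_add_one_zmod hn
  have hpow : (2 : ZMod p) / 2 ^ (p - s) = 2 ^ s := by
    rw [div_eq_iff (pow_ne_zero _ h2), ← pow_add, Nat.add_sub_cancel' (by lia), ZMod.pow_card]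
  have hcast : ((p - 1 - s : ℕ) : ZMod p) + 1 = -s := by
    push_cast [show s ≤ p - 1 by lia, show 1 ≤ p by lia]
    rw [CharP.cast_eq_zero]
    ring
  rw [genHarmonic_eq_sum_range_pow (by lia) hsp,
    ← faulhaber_natCast (isUnit_factorial_zmod (by lia)), hhalf,
    faulhaber_one_half (isUnit_factorial_zmod (by lia)), hcast,
    show p - 1 - s + 1 = p - s by lia, hpow, div_neg, ← neg_div]
  ring

theorem sum_Ico_one_two_mul_add_one {M : Type*} [AddCommMonoid M] (f : ℕ → M) (n : ℕ) :
    ∑ j ∈ Ico 1 (2 * n + 1), f j = ∑ j ∈ Icc 1 n, (f j + f (2 * n + 1 - j)) := by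
  rw [sum_add_distrib, ← Ico_add_one_right_eq_Icc, sum_Ico_reflect f 1 (by lia),
    show 2 * n + 1 + 1 - (n + 1) = n + 1 by lia, Nat.add_sub_cancel,
    sum_Ico_consecutive f (by lia) (by lia)]

theorem sum_Ico_genHarmonic_one_div_sq_eq_half {n : ℕ} (hn : p = 2 * n + 1) :
    ∑ j ∈ Ico 1 p, genHarmonic (ZMod p) 1 (j - 1) / (j : ZMod p) ^ 2 =
      2 * ∑ j ∈ Icc 1 n, genHarmonic (ZMod p) 1 j / (j : ZMod p) ^ 2 -
        genHarmonic (ZMod p) 3 n := by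
  have hpairs := sum_Ico_one_two_mul_add_one
    (fun j ↦ genHarmonic (ZMod p) 1 (j - 1) / (j : ZMod p) ^ 2) n
  rw [← hn] at hpairs
  rw [hpairs, genHarmonic, mul_sum, ← sum_sub_distrib]
  refine sum_congr rfl fun j hj ↦ ?_
  obtain ⟨hj1, hjn⟩ := mem_Icc.mp hj
  have hneg : ((p - j : ℕ) : ZMod p) = -j := by
    rw [Nat.cast_sub (by lia), CharP.cast_eq_zero, zero_sub]
  have hpred := genHarmonic_succ (K := ZMod p) 1 (j - 1)
  rw [Nat.sub_add_cancel hj1] at hpred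
  rw [Nat.sub_right_comm, genHarmonic_one_reflect (by lia) (by lia), hneg, hpred]
  ring

theorem sum_genHarmonic_one_div_sq_half {n : ℕ} (hn : p = 2 * n + 1) (hp : 3 < p) :
    ∑ j ∈ Icc 1 n, genHarmonic (ZMod p) 1 j / (j : ZMod p) ^ 2 =
      -((bernoulli (p - 3) : ZMod p) / 2) := by
  have h2 : (2 : ZMod p) ≠ 0 := two_ne_zero_zmod (by lia)
  have h3 : (3 : ZMod p) ≠ 0 := by
    simpa using natCast_ne_zero_of_isUnit_factorial (isUnit_factorial_zmod hp) three_pos le_rfl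
  have hthree : genHarmonic (ZMod p) 3 n = -2 * (bernoulli (p - 3) : ZMod p) := by
    rw [genHarmonic_half hn (by lia) (by lia), Nat.cast_ofNat, div_eq_iff h3]
    ring
  have hfold := sum_Ico_genHarmonic_one_div_sq_eq_half hn
  rw [sum_Ico_genHarmonic_one_div_sq hp, hthree] at hfold
  field_simp
  linear_combination -hfold

end PrimeField

theorem stmt6 (p : ℕ) (hp : p.Prime) (hodd : Odd p) :
    ratModEq p
      (∑ k ∈ Finset.Icc 1 ((p - 1) / 2), ((2 * k).choose k : ℚ) / (k * 4 ^ k) * H2 k)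
      (bernoulli (p - 3) / 2) := by
  have : Fact p.Prime := ⟨hp⟩
  obtain ⟨n, hn⟩ := hodd
  rw [show (p - 1) / 2 = n by lia]
  rcases eq_or_ne p 3 with rfl | hne
  · obtain rfl : n = 1 := by lia
    norm_num [ratModEq, H2]
  have hp3 : 3 < p := by have := hp.two_le; lia
  have hfac : IsUnit (n ! : ZMod p) := isUnit_factorial_zmod (by lia)
  have h2 : ((2 : ℕ) : ZMod p) ≠ 0 := two_ne_zero_zmod (by lia)
  have hsum := reducesTo_sum_centralBinom (two_mul_add_one_zmod hn) hfac
  rw [binomialTransform_genHarmonic_two_div hfac, sum_genHarmonic_one_div_sq_half hn hp3,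
    neg_neg] at hsum
  have hbern := (reducesTo_bernoulli (isUnit_factorial_zmod (p := p) (n := p - 3 + 1)
    (by lia))).div (.natCast 2) h2
  exact hsum.ratModEq (by exact_mod_cast hbern)
end
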